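/- arXiv:1212.3529 — 2 statements merged into one kernel-verified Lean document; each statement's English description precedes it below -/
import Mathlib

section
/- Let R be a ring. The following are equivalent: (1) R has a left Artinian left quotient ring Q = C⁻¹R; (2) (a) the ring R̄ = R/n is a left Goldie ring, (b) the prime radical n is a nilpotent ideal, (c) C' ⊆ C, (d) for every 1 ≤ i ≤ ν the left R̄-module f_i contains no infinite direct sum of nonzero submodules, and (e) for every element c̄ ∈ C̄ the map f_i → f_i, f ↦ f·c̄, is injective for all 1 ≤ i ≤ ν. Moreover, if these equivalent conditions hold then C = C', C⁻¹n is the prime radical of Q and is a nilpotent ideal of nilpotency degree ν, and the map Q/C⁻¹n → Q̄, c⁻¹r + C⁻¹n ↦ c̄⁻¹r̄, is a ring isomorphism. -/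
open Function

universe u v

/-- A regular element of a ring: a two-sided non-zero-divisor. -/
def IsRegElem {R : Type*} [Ring R] (c : R) : Prop :=
  (∀ x : R, c * x = 0 → x = 0) ∧ (∀ x : R, x * c = 0 → x = 0)

/-- The set `C` of regular elements of a ring. -/
def regSet (R : Type*) [Ring R] : Set R := {c : R | IsRegElem c}

/-- A (left) ideal is two-sided. -/
def Ideal.IsTwoSidedNC {R : Type*} [Ring R] (I : Ideal R) : Prop :=
  ∀ a ∈ I, ∀ r : R, a * r ∈ I

/-- A prime (two-sided) ideal of a possibly noncommutative ring. -/
def Ideal.IsPrimeNC {R : Type*} [Ring R] (P : Ideal R) : Prop :=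
  P ≠ ⊤ ∧ P.IsTwoSidedNC ∧ ∀ a b : R, (∀ r : R, a * r * b ∈ P) → a ∈ P ∨ b ∈ P

/-- The prime radical `n` of a ring: the intersection of all prime ideals. -/
def primeRadical (R : Type*) [Ring R] : Ideal R := sInf {P : Ideal R | P.IsPrimeNC}

/-- `n` is a nilpotent ideal. -/
def IsNilpotentIdeal {R : Type*} [Ring R] (I : Ideal R) : Prop := ∃ k : ℕ, I ^ (k + 1) = ⊥

/-- `φ : R →+* Q` realizes `Q` as a left quotient ring `C⁻¹R` of `R`:  `R` embeds in `Q`,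
every regular element of `R` becomes invertible in `Q`, and every element of `Q` has the
form `(φ c)⁻¹ * (φ r)` with `c` regular. -/
structure IsLeftQuotRing {R : Type u} {Q : Type v} [Ring R] [Ring Q] (φ : R →+* Q) : Prop where
  inj : Function.Injective φ
  isUnit : ∀ c : R, IsRegElem c → IsUnit (φ c)
  denom : ∀ q : Q, ∃ c r : R, IsRegElem c ∧ φ c * q = φ r

/-- Data of a left quotient ring of `R`. -/
structure LeftQuotData (R : Type u) [Ring R] : Type (u + 1) where
  Q : Type u
  [instQ : Ring Q]
  φ : R →+* Q
  quot : IsLeftQuotRing φ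

attribute [instance] LeftQuotData.instQ

/-- `R` has a left Artinian left quotient ring `Q = C⁻¹R`. -/
def HasArtinianLeftQuot (R : Type u) [Ring R] : Prop :=
  ∃ d : LeftQuotData R, IsArtinianRing d.Q

/-- A subset of a ring is a left annihilator. -/
def IsLeftAnnihilatorSet {R : Type*} [Ring R] (A : Set R) : Prop :=
  ∃ S : Set R, A = {r : R | ∀ s ∈ S, r * s = 0}

/-- The ascending chain condition on left annihilators. -/
def ACCLeftAnnihilators (R : Type*) [Ring R] : Prop :=
  ∀ f : ℕ → Set R, (∀ i, IsLeftAnnihilatorSet (f i)) → (∀ i j, i ≤ j → f i ⊆ f j) →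
    ∃ N, ∀ k, N ≤ k → f k = f N

/-- The module `M` contains no infinite direct sum of nonzero submodules. -/
def NoInfiniteIndepFamily (R : Type*) (M : Type*) [Ring R] [AddCommGroup M] [Module R M] : Prop :=
  ¬ ∃ f : ℕ → Submodule R M, (∀ i, f i ≠ ⊥) ∧ iSupIndep f

/-- A left Goldie ring: ACC on left annihilators and no infinite direct sums of nonzero
left ideals. -/
def IsLeftGoldie (R : Type*) [Ring R] : Prop :=
  ACCLeftAnnihilators R ∧ NoInfiniteIndepFamily R R

/-- The subquotient `n^i/n^{i+1}` of `R` determined by the prime radical `n`. -/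
abbrev grPiece (R : Type*) [Ring R] (i : ℕ) :=
  ↥(primeRadical R ^ i) ⧸
    (Submodule.comap (primeRadical R ^ i : Ideal R).subtype (primeRadical R ^ (i + 1)))

/-- The class of `x ∈ n^i` in `n^i/n^{i+1}`. -/
def grMk {R : Type*} [Ring R] (i : ℕ) (x : R) (hx : x ∈ primeRadical R ^ i) : grPiece R i :=
  Submodule.Quotient.mk ⟨x, hx⟩

/-- The `C̄`-torsion submodule `τ_i` of `n^i/n^{i+1}` (take the span, which coincides with the
set of torsion elements whenever the latter is a submodule, e.g. when `C̄` is a left Ore set);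
here `C̄` is represented through `π : R → R̄` as `{c : R | IsRegElem (π c)}`. -/
def tauSub {R : Type u} {Rbar : Type v} [Ring R] [Ring Rbar] (π : R →+* Rbar) (i : ℕ) :
    Submodule R (grPiece R i) :=
  Submodule.span R {u : grPiece R i | ∃ c : R, IsRegElem (π c) ∧ c • u = 0}

/-- The `C̄`-torsionfree module `f_i = (n^i/n^{i+1})/τ_i`. -/
abbrev fMod {R : Type u} {Rbar : Type v} [Ring R] [Ring Rbar] (π : R →+* Rbar) (i : ℕ) :=
  grPiece R i ⧸ tauSub π i

/-- The class of `x ∈ n^i` in `f_i`. -/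
def fMk {R : Type u} {Rbar : Type v} [Ring R] [Ring Rbar] (π : R →+* Rbar) (i : ℕ) (x : R)
    (hx : x ∈ primeRadical R ^ i) : fMod π i :=
  Submodule.Quotient.mk (grMk i x hx)

/-- The subset `C⁻¹K = {(φ c)⁻¹ (φ a) : c ∈ C, a ∈ K}` of a left quotient ring. -/
def locSet {R : Type u} {Q : Type v} [Ring R] [Ring Q] (φ : R →+* Q) (K : Ideal R) : Set Q :=
  {q : Q | ∃ c a : R, IsRegElem c ∧ a ∈ K ∧ φ c * q = φ a}

/-- A subset of a ring is a left Ore set (multiplicatively closed and satisfying the left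
Ore condition). -/
def IsLeftOreSubset {A : Type*} [Ring A] (S : Set A) : Prop :=
  (1 : A) ∈ S ∧ (∀ s ∈ S, ∀ t ∈ S, s * t ∈ S) ∧
    ∀ s ∈ S, ∀ a : A, ∃ t ∈ S, ∃ b : A, t * a = b * s

/-- A left denominator set. -/
def IsLeftDenominatorSet {A : Type*} [Ring A] (S : Set A) : Prop :=
  IsLeftOreSubset S ∧ ∀ a : A, ∀ s ∈ S, a * s = 0 → ∃ t ∈ S, t * a = 0

/-!
Let `C' = π⁻¹(C̄)`. Each `f_i` is a torsionfree module of numerators for `C⁻¹n^i/C⁻¹n^{i+1}`, so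
one has no infinite direct sum of nonzero submodules iff the other has none. By Goldie's theorem,
essential left ideals of the semiprime left Goldie ring `R̄` contain regular elements, so essential
submodules of `f_i` become everything after localization.

If the conditions hold, right multiplication by `s ∈ C'` is an injective endomorphism of `f_i`,
hence has essential range; Goldie's theorem turns this into a left Ore condition for `C'` modulo
`n^{i+1}` on `n^i`. Climbing the powers of the nilpotent ideal `n` makes `C'` a left Ore set. The
pieces `C⁻¹n^i/C⁻¹n^{i+1}` of the resulting ring `Q` are semisimple of finite length, so `Q` is left
Artinian and is the left quotient ring of `R`.

Conversely, right multiplication by a unit `u` of a left Noetherian ring preserves a left ideal `J`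
only if `J u = J`, since the induced surjection of `Q/J` is injective. Hence two-sided ideals of `R`
extend to two-sided ideals of `Q`, primes of `Q` contract to primes of `R`, and the prime radical of
`Q` is `C⁻¹n`, with powers `C⁻¹n^k`. The ring `Q/C⁻¹n` is then a left Artinian ring of fractions of
`R̄`, and `c ∈ R` is regular iff it is invertible in `Q`, iff it is invertible modulo the nilpotent
ideal `C⁻¹n`, iff `c̄` is regular.
-/

/-- An essential (large) submodule: the only submodule disjoint from it is zero. -/
def IsEssential {R M : Type*} [Ring R] [AddCommGroup M] [Module R M] (E : Submodule R M) : Prop :=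
  ∀ F : Submodule R M, Disjoint E F → F = ⊥

section Essential

variable {R M M' : Type*} [Ring R] [AddCommGroup M] [Module R M] [AddCommGroup M'] [Module R M']

theorem isEssential_iff {E : Submodule R M} :
    IsEssential E ↔ ∀ m, m ≠ 0 → ∃ r : R, r • m ≠ 0 ∧ r • m ∈ E := by
  constructor
  · intro hE m hm
    by_contra! hcon
    refine hm (Submodule.span_singleton_eq_bot.1 (hE _ (Submodule.disjoint_def.2 ?_)))
    rintro _ hxE hx
    obtain ⟨r, rfl⟩ := Submodule.mem_span_singleton.1 hx
    by_contra h0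
    exact hcon r h0 hxE
  · intro hE F hEF
    by_contra hF
    obtain ⟨m, hmF, hm⟩ := F.ne_bot_iff.1 hF
    obtain ⟨r, hr, hrE⟩ := hE m hm
    exact hr (Submodule.disjoint_def.1 hEF _ hrE (F.smul_mem r hmF))

theorem IsEssential.mono {E E' : Submodule R M} (hE : IsEssential E) (h : E ≤ E') :
    IsEssential E' :=
  fun F hF => hE F (hF.mono_left h)

theorem IsEssential.comap {E : Submodule R M} (hE : IsEssential E) (f : M' →ₗ[R] M) :
    IsEssential (E.comap f) := by
  refine isEssential_iff.2 fun m hm => ?_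
  by_cases hfm : f m = 0
  · exact ⟨1, by rwa [one_smul], by rw [one_smul, Submodule.mem_comap, hfm]; exact E.zero_mem⟩
  · obtain ⟨r, hr, hrE⟩ := isEssential_iff.1 hE (f m) hfm
    rw [← map_smul] at hr hrE
    exact ⟨r, fun h0 => hr (by rw [h0, map_zero]), hrE⟩

theorem iSupIndep_of_disjoint_iSup_gt {f : ℕ → Submodule R M}
    (hf : ∀ k, Disjoint (f k) (⨆ j > k, f j)) : iSupIndep f := by
  refine (iSupIndep_iff_finsetSum_eq_zero_imp_eq_zero f).2 fun s v hv hsum => ?_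
  by_contra! hne
  have hmin : ∃ k, k ∈ s ∧ v k ≠ 0 := hne
  classical
  obtain ⟨hks, hvk⟩ := Nat.find_spec hmin
  set k := Nat.find hmin
  have hrest : ∑ j ∈ s.erase k, v j ∈ ⨆ j > k, f j := by
    refine Submodule.sum_mem _ fun j hj => ?_
    obtain ⟨hjk, hjs⟩ := Finset.mem_erase.1 hj
    rcases lt_or_gt_of_ne hjk with hlt | hgt
    · have hvj : v j = 0 := by simpa only [hjs, true_and, not_not] using Nat.find_min hmin hlt
      exact hvj ▸ Submodule.zero_mem _
    · exact Submodule.mem_iSup_of_mem j (Submodule.mem_iSup_of_mem hgt (hv j hjs))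
  rw [← Finset.add_sum_erase s v hks, add_eq_zero_iff_eq_neg] at hsum
  exact hvk (Submodule.disjoint_def.1 (hf k) _ (hv k hks) (hsum ▸ Submodule.neg_mem _ hrest))

/-- `SplitsBelow L' L`: the submodule `L' ≤ L` misses a nonzero submodule of `L`, that is, `L'` is
not essential in `L`. -/
def SplitsBelow (L' L : Submodule R M) : Prop :=
  L' ≤ L ∧ ∃ B ≤ L, B ≠ ⊥ ∧ Disjoint B L'

theorem NoInfiniteIndepFamily.wellFounded_splitsBelow (h : NoInfiniteIndepFamily R M) :
    WellFounded (SplitsBelow : Submodule R M → Submodule R M → Prop) := by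
  refine wellFounded_iff_isEmpty_descending_chain.2 ⟨fun ⟨L, hL⟩ => h ?_⟩
  choose hle B hBL hB hdisj using hL
  refine ⟨B, hB, iSupIndep_of_disjoint_iSup_gt fun k => (hdisj k).mono_right ?_⟩
  exact iSup₂_le fun j hj => (hBL j).trans (antitone_nat_of_succ_le hle hj)

-- A nonzero `F` missing `f M` has images `f^k F ⊆ f^k M` missing `f^(k+1) M`.
theorem NoInfiniteIndepFamily.isEssential_range (h : NoInfiniteIndepFamily R M) {f : Module.End R M}
    (hf : Injective f) : IsEssential (LinearMap.range f) := by
  intro F hF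
  by_contra hF0
  obtain ⟨_, ⟨k, rfl⟩, hmin⟩ := h.wellFounded_splitsBelow.has_min
    (Set.range fun k : ℕ => LinearMap.range (f ^ k)) ⟨_, 0, rfl⟩
  have hfk : Injective (f ^ k) := by
    rw [Module.End.coe_pow]
    exact hf.iterate k
  have hrange : LinearMap.range (f ^ (k + 1)) = (LinearMap.range f).map (f ^ k) := by
    rw [pow_succ, Module.End.mul_eq_comp, LinearMap.range_comp]
  refine hmin _ ⟨k + 1, rfl⟩ ⟨?_, F.map (f ^ k), LinearMap.map_le_range, ?_, ?_⟩
  · exact hrange.trans_le LinearMap.map_le_range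
  · rwa [Ne, ← Submodule.map_bot (f ^ k), (Submodule.map_injective_of_injective hfk).eq_iff]
  · exact (hrange ▸ Submodule.disjoint_map hfk hF).symm

end Essential

section ChainConditions

variable {R M : Type*} [Ring R] [AddCommGroup M] [Module R M]

theorem noInfiniteIndepFamily_of_isNoetherian [IsNoetherian R M] : NoInfiniteIndepFamily R M := by
  rintro ⟨f, hf, hind⟩
  refine Set.infinite_univ (α := ℕ) ?_
  simpa only [ne_eq, hf, not_false_eq_true, Set.ofPred_true] using
    Submodule.finite_ne_bot_of_iSupIndep hind

theorem isSemisimpleModule_of_isEssential_eq_top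
    (h : ∀ E : Submodule R M, IsEssential E → E = ⊤) : IsSemisimpleModule R M := by
  refine { exists_isCompl := fun E => ?_ }
  obtain ⟨F, -, hF⟩ := zorn_le_nonempty₀ {F : Submodule R M | Disjoint E F}
    (fun c hc hchain y _ => ⟨sSup c, hchain.directedOn.disjoint_sSup_right.2 hc,
      fun z hz => le_sSup hz⟩) ⊥ disjoint_bot_right
  refine ⟨F, hF.prop, codisjoint_iff.2 (h _ fun G hG => ?_)⟩
  have hGF : F ⊔ G ≤ F :=
    hF.le_of_ge (hF.prop.disjoint_sup_right_of_disjoint_sup_left hG) le_sup_left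
  exact hG.eq_bot_of_ge ((le_sup_right.trans hGF).trans le_sup_right)

theorem NoInfiniteIndepFamily.isArtinian [IsSemisimpleModule R M]
    (h : NoInfiniteIndepFamily R M) : IsArtinian R M := by
  obtain ⟨s, hind, htop, hsimple⟩ := IsSemisimpleModule.exists_sSupIndep_sSup_simples_eq_top R M
  have hfin : s.Finite := by
    by_contra hinf
    let g := Set.Infinite.natEmbedding s hinf
    refine h ⟨fun k => g k, fun k => ?_, ((sSupIndep_iff s).1 hind).comp g.injective⟩
    exact (isSimpleModule_iff_isAtom.1 (hsimple _ (g k).2)).1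
  have hiff := (IsSemisimpleModule.finite_tfae (R := R) (M := M)).out 4 2
  exact hiff.1 ⟨s, hfin, hind, htop, hsimple⟩

theorem isArtinianRing_of_filtration (J : ℕ → Ideal R) (hanti : ∀ i, J (i + 1) ≤ J i)
    (h0 : J 0 = ⊤) {k : ℕ} (hk : J k = ⊥)
    (hJ : ∀ i, IsArtinian R (J i ⧸ Submodule.comap (J i).subtype (J (i + 1)))) :
    IsArtinianRing R := by
  suffices h : ∀ j i, i + j = k → IsArtinian R (J i) by
    have := h k 0 (zero_add k)
    rw [h0] at this
    exact isArtinian_of_linearEquiv Submodule.topEquiv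
  intro j
  induction j with
  | zero =>
    rintro i rfl
    rw [add_zero] at hk
    rw [hk]
    infer_instance
  | succ j ih =>
    intro i hi
    have := ih (i + 1) (by omega)
    rw [isArtinian_iff_submodule_quotient (Submodule.comap (J i).subtype (J (i + 1)))]
    exact ⟨isArtinian_of_linearEquiv (Submodule.comapSubtypeEquivOfLe (hanti i)).symm, hJ i⟩

end ChainConditions

/-! ### Goldie's theorem on regular elements -/

/-- A semiprime ring, in elementwise form: `a A a = 0` only for `a = 0`. -/
def IsSemiprimeNC (A : Type*) [Ring A] : Prop := ∀ a : A, (∀ r, a * r * a = 0) → a = 0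

section Goldie

variable {A : Type*} [Ring A]

theorem mem_torsionOf_self_iff {r a : A} : r ∈ Ideal.torsionOf A A a ↔ r * a = 0 :=
  Ideal.mem_torsionOf_iff a r

theorem ACCLeftAnnihilators.exists_maximalFor_torsionOf (hacc : ACCLeftAnnihilators A)
    {P : A → Prop} (hP : ∃ a, P a) : ∃ a, MaximalFor P (Ideal.torsionOf A A) a := by
  let T := Set.range (Ideal.torsionOf A A)
  have : WellFoundedGT T := wellFoundedGT_iff_monotone_chain_condition.2 fun L => by
    have hann : ∀ k, IsLeftAnnihilatorSet ((L k : Ideal A) : Set A) := fun k => by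
      obtain ⟨a, ha⟩ := (L k).2
      refine ⟨{a}, Set.ext fun r => ?_⟩
      simp only [← ha, SetLike.mem_coe, mem_torsionOf_self_iff, Set.mem_singleton_iff, forall_eq,
        Set.mem_ofPred_eq]
    obtain ⟨N, hN⟩ := hacc _ hann fun i j hij => L.monotone hij
    exact ⟨N, fun k hk => Subtype.ext (SetLike.coe_injective (hN k hk).symm)⟩
  exact exists_maximalFor_of_wellFoundedGT P (fun a => (⟨_, a, rfl⟩ : T)) hP

theorem torsionOf_le_torsionOf_mul (a b : A) :
    Ideal.torsionOf A A a ≤ Ideal.torsionOf A A (a * b) := by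
  intro r hr
  rw [mem_torsionOf_self_iff] at hr ⊢
  rw [← mul_assoc, hr, zero_mul]

-- A nonzero `a ∈ L` with maximal annihilator satisfies `ann (a x a) = ann a` as soon as
-- `a x a ≠ 0`, and then `x a` has the required property.
theorem IsSemiprimeNC.exists_mem_torsionOf_sq_le (hA : IsSemiprimeNC A)
    (hacc : ACCLeftAnnihilators A) {L : Ideal A} (hL : L ≠ ⊥) :
    ∃ b ∈ L, b ≠ 0 ∧ Ideal.torsionOf A A (b * b) ≤ Ideal.torsionOf A A b := by
  obtain ⟨a, ⟨haL, ha0⟩, hmax⟩ := hacc.exists_maximalFor_torsionOf (L.ne_bot_iff.1 hL)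
  obtain ⟨x, hx⟩ : ∃ x, a * x * a ≠ 0 := by
    by_contra! h
    exact ha0 (hA a h)
  have hann : Ideal.torsionOf A A (a * x * a) ≤ Ideal.torsionOf A A a :=
    hmax ⟨L.mul_mem_left _ haL, hx⟩ (mul_assoc a x a ▸ torsionOf_le_torsionOf_mul a (x * a))
  refine ⟨x * a, L.mul_mem_left x haL, fun h => hx (by rw [mul_assoc, h, mul_zero]), fun r hr => ?_⟩
  rw [mem_torsionOf_self_iff] at hr ⊢
  rw [← mul_assoc]
  refine mem_torsionOf_self_iff.1 (hann (mem_torsionOf_self_iff.2 ?_))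
  simpa only [mul_assoc] using hr

theorem IsSemiprimeNC.eq_zero_of_isEssential_torsionOf (hA : IsSemiprimeNC A)
    (hacc : ACCLeftAnnihilators A) {z : A} (hz : IsEssential (Ideal.torsionOf A A z)) : z = 0 := by
  rw [← Ideal.span_singleton_eq_bot]
  by_contra hne
  obtain ⟨b, hbz, hb0, hb⟩ := hA.exists_mem_torsionOf_sq_le hacc hne
  obtain ⟨r, rfl⟩ := Ideal.mem_span_singleton'.1 hbz
  have hess : IsEssential (Ideal.torsionOf A A (r * z)) := by
    refine (hz.comap (LinearMap.toSpanSingleton A A r)).mono fun x hx => ?_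
    simpa only [Submodule.mem_comap, LinearMap.toSpanSingleton_apply, mem_torsionOf_self_iff,
      smul_eq_mul, mul_assoc] using hx
  obtain ⟨s, hs0, hs⟩ := isEssential_iff.1 hess _ hb0
  rw [mem_torsionOf_self_iff, smul_eq_mul, mul_assoc] at hs
  exact hs0 (mem_torsionOf_self_iff.1 (hb (mem_torsionOf_self_iff.2 hs)))

theorem torsionOf_add_le_inf {c a : A} (hac : a * c = 0)
    (hc : Ideal.torsionOf A A (c * c) ≤ Ideal.torsionOf A A c) :
    Ideal.torsionOf A A (c + a) ≤ Ideal.torsionOf A A c ⊓ Ideal.torsionOf A A a := by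
  intro r hr
  rw [mem_torsionOf_self_iff, mul_add] at hr
  have hrc : r * c = 0 := by
    refine mem_torsionOf_self_iff.1 (hc (mem_torsionOf_self_iff.2 ?_))
    calc r * (c * c) = (r * c + r * a) * c := by rw [add_mul, mul_assoc r a, hac, mul_zero,
          add_zero, mul_assoc]
      _ = 0 := by rw [hr, zero_mul]
  rw [hrc, zero_add] at hr
  exact ⟨mem_torsionOf_self_iff.2 hrc, mem_torsionOf_self_iff.2 hr⟩

theorem torsionOf_add_sq_le {c a : A} (hac : a * c = 0)
    (hc : Ideal.torsionOf A A (c * c) ≤ Ideal.torsionOf A A c)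
    (ha : Ideal.torsionOf A A (a * a) ≤ Ideal.torsionOf A A a) :
    Ideal.torsionOf A A ((c + a) * (c + a)) ≤ Ideal.torsionOf A A (c + a) := by
  intro r hr
  rw [mem_torsionOf_self_iff, ← mul_assoc] at hr
  obtain ⟨hc', ha'⟩ := Submodule.mem_inf.1
    (torsionOf_add_le_inf hac hc (mem_torsionOf_self_iff.2 hr))
  rw [mem_torsionOf_self_iff, mul_assoc, add_mul, hac, add_zero] at hc'
  have hrc : r * c = 0 := mem_torsionOf_self_iff.1 (hc (mem_torsionOf_self_iff.2 hc'))
  rw [mem_torsionOf_self_iff, mul_add, hrc, zero_add, mul_assoc] at ha'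
  rw [mem_torsionOf_self_iff, mul_add, hrc, zero_add]
  exact mem_torsionOf_self_iff.1 (ha (mem_torsionOf_self_iff.2 ha'))

-- Choose `c ∈ I` with `ann c² = ann c` and `ann c` minimal for `SplitsBelow`. If `I ∩ ann c ≠ 0`,
-- then `c` can be corrected by some `a ∈ I ∩ ann c`, and `Aa ⊆ ann c` misses `ann (c + a)`.
theorem IsSemiprimeNC.exists_mem_torsionOf_eq_bot (hA : IsSemiprimeNC A) (hG : IsLeftGoldie A)
    {I : Ideal A} (hI : IsEssential I) : ∃ c ∈ I, Ideal.torsionOf A A c = ⊥ := by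
  obtain ⟨hacc, hind⟩ := hG
  obtain ⟨_, ⟨c, hcI, hc, rfl⟩, hmin⟩ := hind.wellFounded_splitsBelow.has_min
    {L | ∃ c ∈ I, Ideal.torsionOf A A (c * c) ≤ Ideal.torsionOf A A c ∧ Ideal.torsionOf A A c = L}
    ⟨_, 0, I.zero_mem, by rw [mul_zero], rfl⟩
  refine ⟨c, hcI, hI _ (disjoint_iff.2 ?_)⟩
  by_contra hne
  obtain ⟨a, ⟨haI, hac⟩, ha0, ha⟩ := hA.exists_mem_torsionOf_sq_le hacc hne
  have hac0 := mem_torsionOf_self_iff.1 hac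
  have hle := torsionOf_add_le_inf hac0 hc
  refine hmin _ ⟨c + a, I.add_mem hcI haI, torsionOf_add_sq_le hac0 hc ha, rfl⟩
    ⟨hle.trans inf_le_left, Ideal.span {a}, ?_, ?_, ?_⟩
  · rwa [Ideal.span_singleton_le_iff_mem]
  · rwa [Ne, Ideal.span_singleton_eq_bot]
  · refine Submodule.disjoint_def.2 fun x hx hxca => ?_
    obtain ⟨r, rfl⟩ := Ideal.mem_span_singleton'.1 hx
    have hra := mem_torsionOf_self_iff.1 (hle hxca).2
    rw [mul_assoc] at hra
    exact mem_torsionOf_self_iff.1 (ha (mem_torsionOf_self_iff.2 hra))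

theorem NoInfiniteIndepFamily.isEssential_span_singleton (h : NoInfiniteIndepFamily A A) {c : A}
    (hc : Ideal.torsionOf A A c = ⊥) : IsEssential (Ideal.span {c}) := by
  rw [Ideal.span, ← LinearMap.range_toSpanSingleton]
  exact h.isEssential_range (LinearMap.ker_eq_bot.1 hc)

theorem IsSemiprimeNC.isRegElem_of_torsionOf_eq_bot (hA : IsSemiprimeNC A) (hG : IsLeftGoldie A)
    {c : A} (hc : Ideal.torsionOf A A c = ⊥) : IsRegElem c := by
  refine ⟨fun x hx => hA.eq_zero_of_isEssential_torsionOf hG.1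
    ((hG.2.isEssential_span_singleton hc).mono ?_), fun x hx => ?_⟩
  · rwa [Ideal.span_singleton_le_iff_mem, mem_torsionOf_self_iff]
  · rwa [← Submodule.mem_bot A, ← hc, mem_torsionOf_self_iff]

theorem IsSemiprimeNC.exists_isRegElem_mem (hA : IsSemiprimeNC A) (hG : IsLeftGoldie A)
    {I : Ideal A} (hI : IsEssential I) : ∃ c ∈ I, IsRegElem c := by
  obtain ⟨c, hcI, hc⟩ := hA.exists_mem_torsionOf_eq_bot hG hI
  exact ⟨c, hcI, hA.isRegElem_of_torsionOf_eq_bot hG hc⟩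

end Goldie

/-! ### Left fractions with denominators in a submonoid -/

/-- `φ : R →+* Q` inverts `S` and every element of `Q` is a left fraction with denominator in `S`.
Injectivity is not required, so that surjections (with `S = ⊥`) and localizations are treated
alike. -/
structure IsLeftFractionMap {R Q : Type*} [Ring R] [Ring Q] (S : Submonoid R) (φ : R →+* Q) :
    Prop where
  isUnit : ∀ s ∈ S, IsUnit (φ s)
  denom : ∀ q : Q, ∃ s ∈ S, ∃ r : R, φ s * q = φ r

/-- A `φ`-semilinear map exhibiting `M` as a module of numerators of the `Q`-module `N`: it is
injective and every element of `N` is a left fraction with denominator in `S`. -/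
structure IsNumeratorEmbedding {R Q M N : Type*} [Ring R] [Ring Q] [AddCommGroup M] [Module R M]
    [AddCommGroup N] [Module Q N] {φ : R →+* Q} (S : Submonoid R) (ι : M →ₛₗ[φ] N) : Prop where
  injective : Injective ι
  denom : ∀ n : N, ∃ s ∈ S, ∃ m : M, φ s • n = ι m

namespace IsLeftFractionMap

variable {R Q M N : Type*} [Ring R] [Ring Q] [AddCommGroup M] [Module R M] [AddCommGroup N]
  [Module Q N] {S : Submonoid R} {φ : R →+* Q} {ι : M →ₛₗ[φ] N}

theorem of_surjective (hφ : Surjective φ) : IsLeftFractionMap ⊥ φ where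
  isUnit s hs := by
    rw [Submonoid.mem_bot.1 hs, map_one]
    exact isUnit_one
  denom q := by
    obtain ⟨r, rfl⟩ := hφ q
    exact ⟨1, Submonoid.one_mem _, r, by rw [map_one, one_mul]⟩

theorem comp_surjective {Q' : Type*} [Ring Q'] (h : IsLeftFractionMap S φ) {θ : Q →+* Q'}
    (hθ : Surjective θ) : IsLeftFractionMap S (θ.comp φ) where
  isUnit s hs := (h.isUnit s hs).map θ
  denom q' := by
    obtain ⟨q, rfl⟩ := hθ q'
    obtain ⟨s, hs, r, hr⟩ := h.denom q
    exact ⟨s, hs, r, by rw [RingHom.comp_apply, RingHom.comp_apply, ← map_mul, hr]⟩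

theorem of_comp {B : Type*} [Ring B] {π : R →+* B} {ψ : B →+* Q}
    (h : IsLeftFractionMap S (ψ.comp π)) : IsLeftFractionMap (S.map π) ψ where
  isUnit := by
    rintro _ ⟨s, hs, rfl⟩
    exact h.isUnit s hs
  denom q := by
    obtain ⟨s, hs, r, hr⟩ := h.denom q
    exact ⟨π s, Submonoid.mem_map_of_mem π hs, π r, hr⟩

theorem exists_denom_mul (h : IsLeftFractionMap S φ) (q : Q) {s : R} (hs : s ∈ S) :
    ∃ t ∈ S, ∃ b : R, φ t * q = φ b * φ s := by
  obtain ⟨u, hu⟩ := h.isUnit s hs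
  obtain ⟨t, ht, b, hb⟩ := h.denom (q * ↑u⁻¹)
  exact ⟨t, ht, b, by rw [← hb, ← hu, mul_assoc, Units.inv_mul_cancel_right]⟩

theorem smul_mem_iff (h : IsLeftFractionMap S φ) {E : Submodule Q N} {s : R} (hs : s ∈ S) {n : N} :
    φ s • n ∈ E ↔ n ∈ E := by
  obtain ⟨u, hu⟩ := h.isUnit s hs
  exact hu ▸ E.smul_mem_iff_of_isUnit u.isUnit

theorem smul_eq_zero_iff (h : IsLeftFractionMap S φ) {s : R} (hs : s ∈ S) {n : N} :
    φ s • n = 0 ↔ n = 0 := by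
  simpa only [Submodule.mem_bot] using h.smul_mem_iff (E := ⊥) hs

theorem mem_span_image_iff (h : IsLeftFractionMap S φ) (ι : M →ₛₗ[φ] N) {P : Submodule R M}
    {n : N} : n ∈ Submodule.span Q (ι '' P) ↔ ∃ s ∈ S, ∃ m ∈ P, φ s • n = ι m := by
  constructor
  · intro hn
    induction hn using Submodule.span_induction with
    | mem n hn =>
      obtain ⟨m, hm, rfl⟩ := hn
      exact ⟨1, S.one_mem, m, hm, by rw [map_one, one_smul]⟩
    | zero => exact ⟨1, S.one_mem, 0, P.zero_mem, by rw [smul_zero, map_zero]⟩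
    | add n n' _ _ hn hn' =>
      obtain ⟨s, hs, m, hm, hn⟩ := hn
      obtain ⟨s', hs', m', hm', hn'⟩ := hn'
      obtain ⟨t, ht, b, hb⟩ := h.exists_denom_mul (φ s) hs'
      refine ⟨t * s, S.mul_mem ht hs, t • m + b • m',
        P.add_mem (P.smul_mem t hm) (P.smul_mem b hm'), ?_⟩
      calc φ (t * s) • (n + n') = φ t • φ s • n + (φ t * φ s) • n' := by
            rw [map_mul, smul_add, mul_smul]
        _ = ι (t • m + b • m') := by
            rw [hn, hb, mul_smul, hn', map_add, map_smulₛₗ, map_smulₛₗ]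
    | smul q n _ hn =>
      obtain ⟨s, hs, m, hm, hn⟩ := hn
      obtain ⟨t, ht, b, hb⟩ := h.exists_denom_mul q hs
      exact ⟨t, ht, b • m, P.smul_mem b hm, by rw [smul_smul, hb, mul_smul, hn, map_smulₛₗ]⟩
  · rintro ⟨s, hs, m, hm, hn⟩
    rw [← h.smul_mem_iff hs, hn]
    exact Submodule.subset_span (Set.mem_image_of_mem ι hm)

theorem mem_map_iff (h : IsLeftFractionMap S φ) {I : Ideal R} {q : Q} :
    q ∈ I.map φ ↔ ∃ s ∈ S, ∃ a ∈ I, φ s * q = φ a :=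
  h.mem_span_image_iff φ.toSemilinearMap

theorem map_mem_map_iff (h : IsLeftFractionMap S φ) (hφ : Injective φ) {I : Ideal R} {x : R} :
    φ x ∈ I.map φ ↔ ∃ s ∈ S, s * x ∈ I := by
  simp only [h.mem_map_iff, ← map_mul, hφ.eq_iff, exists_eq_right']

theorem map_comap (h : IsLeftFractionMap S φ) (J : Ideal Q) : (J.comap φ).map φ = J := by
  refine le_antisymm Ideal.map_comap_le fun q hq => ?_
  obtain ⟨s, hs, r, hr⟩ := h.denom q
  exact h.mem_map_iff.2 ⟨s, hs, r, Ideal.mem_comap.2 (hr ▸ J.mul_mem_left _ hq), hr⟩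

theorem disjoint_span_image (h : IsLeftFractionMap S φ) (hι : Injective ι) {P P' : Submodule R M}
    (hP : Disjoint P P') :
    Disjoint (Submodule.span Q (ι '' P)) (Submodule.span Q (ι '' P')) := by
  refine Submodule.disjoint_def.2 fun n hn hn' => ?_
  obtain ⟨s, hs, m, hm, hn⟩ := (h.mem_span_image_iff ι).1 hn
  obtain ⟨s', hs', m', hm', hn'⟩ := (h.mem_span_image_iff ι).1 hn'
  obtain ⟨t, ht, b, hb⟩ := h.exists_denom_mul (φ s) hs'
  have hmm' : t • m = b • m' := hι <| by
    rw [map_smulₛₗ, map_smulₛₗ, ← hn, ← hn', smul_smul, smul_smul, hb]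
  have h0 := Submodule.disjoint_def.1 hP _ (P.smul_mem t hm) (hmm' ▸ P'.smul_mem b hm')
  rw [← h.smul_eq_zero_iff hs, ← h.smul_eq_zero_iff ht, hn, ← map_smulₛₗ, h0, map_zero]

theorem iSupIndep_span_image (h : IsLeftFractionMap S φ) (hι : Injective ι) {κ : Type*}
    {f : κ → Submodule R M} (hf : iSupIndep f) :
    iSupIndep fun k => Submodule.span Q (ι '' f k) := fun k =>
  (h.disjoint_span_image hι (hf k)).mono_right <| iSup₂_le fun j hj =>
    Submodule.span_mono <| Set.image_mono <|
      le_iSup₂_of_le (f := fun j (_ : j ≠ k) => f j) j hj le_rfl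

theorem isEssential_comap (h : IsLeftFractionMap S φ) (hι : Injective ι) {E : Submodule Q N}
    (hE : IsEssential E) : IsEssential (E.comap ι) := by
  refine isEssential_iff.2 fun m hm => ?_
  obtain ⟨q, hq, hqE⟩ := isEssential_iff.1 hE (ι m) ((map_ne_zero_iff ι hι).2 hm)
  obtain ⟨s, hs, r, hr⟩ := h.denom q
  have hrm : ι (r • m) = φ s • q • ι m := by rw [map_smulₛₗ, ← hr, mul_smul]
  refine ⟨r, fun h0 => hq ?_, ?_⟩
  · rw [← h.smul_eq_zero_iff hs, ← hrm, h0, map_zero]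
  · rw [Submodule.mem_comap, hrm]
    exact E.smul_mem _ hqE

theorem noInfiniteIndepFamily_iff (h : IsLeftFractionMap S φ) (hι : IsNumeratorEmbedding S ι) :
    NoInfiniteIndepFamily R M ↔ NoInfiniteIndepFamily Q N := by
  refine not_congr ⟨?_, ?_⟩
  · rintro ⟨f, hf, hind⟩
    refine ⟨_, fun k => ?_, h.iSupIndep_span_image hι.injective hind⟩
    obtain ⟨m, hm, hm0⟩ := (f k).ne_bot_iff.1 (hf k)
    exact (Submodule.ne_bot_iff _).2 ⟨ι m, Submodule.subset_span (Set.mem_image_of_mem ι hm),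
      (map_ne_zero_iff ι hι.injective).2 hm0⟩
  · rintro ⟨g, hg, hind⟩
    refine ⟨fun k => (g k).comap ι, fun k => ?_,
      (iSupIndep_iff_finsetSum_eq_zero_imp_eq_zero _).2 fun s v hv hsum i hi => ?_⟩
    · obtain ⟨n, hn, hn0⟩ := (g k).ne_bot_iff.1 (hg k)
      obtain ⟨s, hs, m, hm⟩ := hι.denom n
      refine (Submodule.ne_bot_iff _).2 ⟨m, ?_, fun h0 => hn0 ?_⟩
      · exact Submodule.mem_comap.2 (hm ▸ (g k).smul_mem _ hn)
      · rw [← h.smul_eq_zero_iff hs, hm, h0, map_zero]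
    · refine (map_eq_zero_iff ι hι.injective).1 ?_
      exact (iSupIndep_iff_finsetSum_eq_zero_imp_eq_zero g).1 hind s (fun i => ι (v i)) hv
        (by rw [← map_sum, hsum, map_zero]) i hi

theorem isSemisimpleModule (h : IsLeftFractionMap S φ) (hι : IsNumeratorEmbedding S ι)
    (hess : ∀ E : Submodule R M, IsEssential E → ∀ m, ∃ s ∈ S, s • m ∈ E) :
    IsSemisimpleModule Q N := by
  refine isSemisimpleModule_of_isEssential_eq_top fun E hE => eq_top_iff.2 fun n _ => ?_
  obtain ⟨s, hs, m, hm⟩ := hι.denom n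
  obtain ⟨t, ht, htE⟩ := hess _ (h.isEssential_comap hι.injective hE) m
  rw [Submodule.mem_comap, map_smulₛₗ, h.smul_mem_iff ht] at htE
  rwa [← h.smul_mem_iff hs, hm]

theorem isUnit_map [IsArtinianRing Q] (h : IsLeftFractionMap S φ) (hφ : Injective φ) {c : R}
    (hc : ∀ x, x * c = 0 → x = 0) : IsUnit (φ c) := by
  refine IsArtinianRing.isUnit_iff_isRightRegular.2
    (isRightRegular_iff_left_eq_zero_of_mul.2 fun q hq => ?_)
  obtain ⟨s, hs, r, hr⟩ := h.denom q
  have hr0 : r = 0 := hc r (hφ (by rw [map_mul, ← hr, mul_assoc, hq, mul_zero, map_zero]))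
  rw [← h.smul_eq_zero_iff hs, smul_eq_mul, hr, hr0, map_zero]

end IsLeftFractionMap

theorem isRegElem_iff_mem_nonZeroDivisors {R : Type*} [Ring R] {c : R} :
    IsRegElem c ↔ c ∈ nonZeroDivisors R :=
  mem_nonZeroDivisors_iff.symm

/-! ### The prime radical of a ring of fractions -/

section PrimeRadical

variable {R : Type*} [Ring R]

theorem mem_primeRadical {x : R} : x ∈ primeRadical R ↔ ∀ P : Ideal R, P.IsPrimeNC → x ∈ P :=
  Submodule.mem_sInf

instance : (primeRadical R).IsTwoSided where
  mul_mem_of_left {a} b ha := by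
    rw [mem_primeRadical] at ha ⊢
    exact fun P hP => hP.2.1 a (ha P hP) b

theorem le_of_pow_le_of_isPrimeNC {P I : Ideal R} (hP : P.IsPrimeNC) {k : ℕ} (hk : I ^ k ≤ P) :
    I ≤ P := by
  induction k with
  | zero =>
    rw [Submodule.pow_zero, Ideal.one_eq_top, top_le_iff] at hk
    exact absurd hk hP.1
  | succ k ih =>
    by_contra hI
    obtain ⟨b, hbI, hb⟩ := SetLike.not_le_iff_exists.1 hI
    refine hI (ih fun a ha => (hP.2.2 a b fun r => hk ?_).resolve_right hb)
    rw [Submodule.pow_succ, mul_assoc]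
    exact Ideal.mul_mem_mul ha (I.mul_mem_left r hbI)

theorem le_primeRadical_of_pow_eq_bot {I : Ideal R} {k : ℕ} (hk : I ^ k = ⊥) :
    I ≤ primeRadical R :=
  le_sInf fun _ hP => le_of_pow_le_of_isPrimeNC hP (hk.le.trans bot_le)

theorem isPrimeNC_annihilator {M : Type*} [AddCommGroup M] [Module R M] [IsSimpleModule R M] :
    (Module.annihilator R M).IsPrimeNC := by
  have := IsSimpleModule.nontrivial R M
  refine ⟨Module.annihilator_eq_top_iff.not.2 (not_subsingleton M),
    fun a ha r => Ideal.mul_mem_right r _ ha, fun a b hab => or_iff_not_imp_right.2 fun hb => ?_⟩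
  obtain ⟨m, hm⟩ : ∃ m : M, b • m ≠ 0 := by simpa only [Module.mem_annihilator, not_forall] using hb
  refine Module.mem_annihilator.2 fun n => ?_
  obtain ⟨r, rfl⟩ := IsSimpleModule.toSpanSingleton_surjective R hm n
  rw [LinearMap.toSpanSingleton_apply, ← mul_smul, ← mul_smul]
  exact Module.mem_annihilator.1 (hab r) m

theorem primeRadical_le_jacobson : primeRadical R ≤ Ring.jacobson R := by
  refine le_sInf fun M hM a ha => ?_
  have : IsSimpleModule R (R ⧸ M) := isSimpleModule_iff_isCoatom.2 hM
  have h1 := Module.mem_annihilator.1 (mem_primeRadical.1 ha _ isPrimeNC_annihilator)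
    (Submodule.Quotient.mk 1 : R ⧸ M)
  rwa [← Submodule.Quotient.mk_smul, smul_eq_mul, mul_one, Submodule.Quotient.mk_eq_zero] at h1

theorem isNilpotentIdeal_primeRadical [IsArtinianRing R] : IsNilpotentIdeal (primeRadical R) := by
  obtain ⟨k, hk⟩ := IsSemiprimaryRing.isNilpotent (R := R)
  have heq : primeRadical R = Ring.jacobson R :=
    primeRadical_le_jacobson.antisymm (le_primeRadical_of_pow_eq_bot hk)
  exact ⟨k, by rw [heq, Ideal.IsTwoSided.pow_succ, hk, Submodule.zero_eq_bot, Ideal.mul_bot]⟩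

theorem isSemiprimeNC_of_ker_eq_primeRadical {Rbar : Type*} [Ring Rbar] {π : R →+* Rbar}
    (hπsurj : Surjective π) (hπker : RingHom.ker π = primeRadical R) : IsSemiprimeNC Rbar := by
  intro a ha
  obtain ⟨x, rfl⟩ := hπsurj a
  rw [← RingHom.mem_ker, hπker, mem_primeRadical]
  refine fun P hP => or_self_iff.1 (hP.2.2 x x fun r => mem_primeRadical.1 ?_ P hP)
  rw [← hπker, RingHom.mem_ker, map_mul, map_mul]
  exact ha (π r)

theorem IsNilpotentIdeal.isUnit_of_isUnit_mk {I : Ideal R} [I.IsTwoSided]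
    (hI : IsNilpotentIdeal I) {c : R} (hc : IsUnit (Ideal.Quotient.mk I c)) : IsUnit c := by
  obtain ⟨k, hk⟩ := hI
  have hlift : ∀ x : R, Ideal.Quotient.mk I x = 1 → IsUnit x := fun x hx => by
    have hmem : x - 1 ∈ I := by
      rw [← Ideal.Quotient.eq_zero_iff_mem, map_sub, hx, map_one, sub_self]
    have hnil : IsNilpotent (x - 1) :=
      ⟨k + 1, by rw [← Submodule.mem_bot R, ← hk]; exact Ideal.pow_mem_pow hmem _⟩
    simpa only [add_sub_cancel] using hnil.isUnit_one_add
  obtain ⟨v, hcv, hvc⟩ := isUnit_iff_exists.1 hc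
  obtain ⟨d, rfl⟩ := Ideal.Quotient.mk_surjective v
  obtain ⟨e, he⟩ := (hlift (c * d) (by rw [map_mul, hcv])).exists_right_inv
  obtain ⟨e', he'⟩ := (hlift (d * c) (by rw [map_mul, hvc])).exists_left_inv
  exact isUnit_iff_exists_and_exists.2
    ⟨⟨d * e, by rw [← mul_assoc, he]⟩, ⟨e' * d, by rw [mul_assoc, he']⟩⟩

end PrimeRadical

theorem mul_mem_iff_of_isUnit {Q : Type*} [Ring Q] [IsNoetherianRing Q] {J : Ideal Q} {u x : Q}
    (hu : IsUnit u) (hJ : ∀ y ∈ J, y * u ∈ J) : x * u ∈ J ↔ x ∈ J := by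
  refine ⟨fun hx => ?_, hJ x⟩
  obtain ⟨u, rfl⟩ := hu
  let f : (Q ⧸ J) →ₗ[Q] Q ⧸ J := J.mapQ J (LinearMap.toSpanSingleton Q Q ↑u) hJ
  have hfmk : ∀ y, f (Submodule.Quotient.mk y) = Submodule.Quotient.mk (y * ↑u) := fun _ => rfl
  have hf : Surjective f := fun y => by
    obtain ⟨y, rfl⟩ := Submodule.Quotient.mk_surjective J y
    exact ⟨Submodule.Quotient.mk (y * ↑u⁻¹), by rw [hfmk, Units.inv_mul_cancel_right]⟩
  refine (Submodule.Quotient.mk_eq_zero J).1 ((map_eq_zero_iff f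
    (IsNoetherian.injective_of_surjective_endomorphism f hf)).1 ?_)
  rwa [hfmk, Submodule.Quotient.mk_eq_zero]

namespace IsLeftFractionMap

variable {R Q : Type*} [Ring R] [Ring Q] {S : Submonoid R} {φ : R →+* Q}

theorem map_isTwoSided [IsNoetherianRing Q] (h : IsLeftFractionMap S φ) (A : Ideal R)
    [A.IsTwoSided] : (A.map φ).IsTwoSided := by
  have hright : ∀ r, ∀ x ∈ A.map φ, x * φ r ∈ A.map φ := fun r x hx => by
    obtain ⟨s, hs, a, ha, hsx⟩ := h.mem_map_iff.1 hx
    refine h.mem_map_iff.2 ⟨s, hs, a * r, Ideal.mul_mem_right _ _ ha, ?_⟩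
    rw [← mul_assoc, hsx, map_mul]
  refine ⟨fun {x} q hx => ?_⟩
  obtain ⟨s, hs, r, hr⟩ := h.denom q
  obtain ⟨u, hu⟩ := h.isUnit s hs
  have hq : q = ↑u⁻¹ * φ r := by rw [← hr, ← hu, Units.inv_mul_cancel_left]
  rw [hq, ← mul_assoc]
  refine hright r _ ((mul_mem_iff_of_isUnit u.isUnit (hu ▸ hright s)).1 ?_)
  rwa [Units.inv_mul_cancel_right]

protected theorem map_mul [IsNoetherianRing Q] (h : IsLeftFractionMap S φ) (I J : Ideal R)
    [I.IsTwoSided] : (I * J).map φ = I.map φ * J.map φ := by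
  have := h.map_isTwoSided I
  refine le_antisymm (Ideal.map_le_iff_le_comap.2 <| Ideal.mul_le.2 fun a ha b hb => ?_) <|
    Ideal.mul_le.2 fun x hx y hy => ?_
  · rw [Ideal.mem_comap, map_mul]
    exact Ideal.mul_mem_mul (Ideal.mem_map_of_mem φ ha) (Ideal.mem_map_of_mem φ hb)
  · obtain ⟨s, hs, b, hb, hsy⟩ := h.mem_map_iff.1 hy
    obtain ⟨u, hu⟩ := h.isUnit s hs
    obtain ⟨t, ht, a, ha, hta⟩ := h.mem_map_iff.1 (Ideal.mul_mem_right (↑u⁻¹ : Q) (I.map φ) hx)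
    refine h.mem_map_iff.2 ⟨t, ht, a * b, Ideal.mul_mem_mul ha hb, ?_⟩
    calc φ t * (x * y) = φ t * (x * ↑u⁻¹) * (↑u * y) := by
          rw [mul_assoc, mul_assoc x, Units.inv_mul_cancel_left]
      _ = φ (a * b) := by rw [hta, hu, hsy, map_mul]

protected theorem map_pow [IsNoetherianRing Q] (h : IsLeftFractionMap S φ) (I : Ideal R)
    [I.IsTwoSided] (k : ℕ) : (I ^ k).map φ = I.map φ ^ k := by
  induction k with
  | zero => rw [Submodule.pow_zero, Submodule.pow_zero, Ideal.one_eq_top, Ideal.one_eq_top,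
      Ideal.map_top]
  | succ k ih => rw [Submodule.pow_succ, Submodule.pow_succ, h.map_mul, ih]

-- Since the left ideal of `Q` generated by `RaR` is two-sided, `RaRb ⊆ P` gives `aQb ⊆ P`.
theorem isPrimeNC_comap [IsNoetherianRing Q] (h : IsLeftFractionMap S φ) {P : Ideal Q}
    (hP : P.IsPrimeNC) : (P.comap φ).IsPrimeNC := by
  obtain ⟨hne, htwo, hprime⟩ := hP
  refine ⟨Ideal.comap_ne_top φ hne, fun a ha r => ?_, fun a b hab => hprime _ _ fun q => ?_⟩
  · rw [Ideal.mem_comap, map_mul]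
    exact htwo _ ha _
  · have hle : Ideal.span {a} * ⊤ ≤
        Submodule.comap (LinearMap.toSpanSingleton R R b) (P.comap φ) := by
      refine Ideal.mul_le.2 fun x hx y _ => ?_
      obtain ⟨r, rfl⟩ := Ideal.mem_span_singleton'.1 hx
      rw [Submodule.mem_comap, LinearMap.toSpanSingleton_apply, smul_eq_mul, mul_assoc, mul_assoc,
        ← mul_assoc a]
      exact Ideal.mul_mem_left _ r (hab y)
    have := h.map_isTwoSided (Ideal.span {a} * ⊤)
    have ha : φ a ∈ (Ideal.span {a} * ⊤).map φ := Ideal.mem_map_of_mem φ <| by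
      simpa only [mul_one] using
        Ideal.mul_mem_mul (Ideal.mem_span_singleton_self a) (Submodule.mem_top (x := (1 : R)))
    obtain ⟨s, hs, x, hx, hsx⟩ := h.mem_map_iff.1 (Ideal.mul_mem_right q _ ha)
    rw [← h.smul_mem_iff hs, smul_eq_mul, ← mul_assoc, hsx, ← map_mul]
    exact hle hx

theorem comap_primeRadical [IsArtinianRing Q] (h : IsLeftFractionMap S φ) (hφ : Injective φ) :
    (primeRadical Q).comap φ = primeRadical R := by
  refine le_antisymm ?_ fun x hx => Ideal.mem_comap.2 <| mem_primeRadical.2 fun P hP =>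
    mem_primeRadical.1 hx (P.comap φ) (h.isPrimeNC_comap hP)
  obtain ⟨k, hk⟩ := isNilpotentIdeal_primeRadical (R := Q)
  refine le_primeRadical_of_pow_eq_bot (k := k + 1) ?_
  rw [← Ideal.map_eq_bot_iff_of_injective hφ, h.map_pow, h.map_comap, hk]

theorem map_primeRadical_pow [IsArtinianRing Q] (h : IsLeftFractionMap S φ) (hφ : Injective φ)
    (k : ℕ) : (primeRadical R ^ k).map φ = primeRadical Q ^ k := by
  rw [h.map_pow, ← h.comap_primeRadical hφ, h.map_comap]

theorem primeRadical_pow_eq_bot_iff [IsArtinianRing Q] (h : IsLeftFractionMap S φ)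
    (hφ : Injective φ) (k : ℕ) : primeRadical Q ^ k = ⊥ ↔ primeRadical R ^ k = ⊥ := by
  rw [← h.map_primeRadical_pow hφ, Ideal.map_eq_bot_iff_of_injective hφ]

theorem isRegElem_iff_isUnit_map [IsArtinianRing Q] (h : IsLeftFractionMap S φ)
    (hφ : Injective φ) {c : R} : IsRegElem c ↔ IsUnit (φ c) := by
  refine ⟨fun hc => h.isUnit_map hφ hc.2, fun hc => ⟨fun x hx => ?_, fun x hx => ?_⟩⟩ <;>
    rw [← map_eq_zero_iff φ hφ, map_mul] at hx
  · exact (map_eq_zero_iff φ hφ).1 (hc.mul_right_eq_zero.1 hx)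
  · exact (map_eq_zero_iff φ hφ).1 (hc.mul_left_eq_zero.1 hx)

theorem isLeftQuotRing {R : Type u} {Q : Type v} [Ring R] [Ring Q] {S : Submonoid R}
    {φ : R →+* Q} [IsArtinianRing Q] (h : IsLeftFractionMap S φ) (hφ : Injective φ) :
    IsLeftQuotRing φ where
  inj := hφ
  isUnit _ := (h.isRegElem_iff_isUnit_map hφ).1
  denom q := by
    obtain ⟨s, hs, r, hr⟩ := h.denom q
    exact ⟨s, r, (h.isRegElem_iff_isUnit_map hφ).2 (h.isUnit s hs), hr⟩

end IsLeftFractionMap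

theorem IsLeftQuotRing.isLeftFractionMap {R : Type u} {Q : Type v} [Ring R] [Ring Q] {φ : R →+* Q}
    (h : IsLeftQuotRing φ) : IsLeftFractionMap (nonZeroDivisors R) φ where
  isUnit c hc := h.isUnit c (isRegElem_iff_mem_nonZeroDivisors.2 hc)
  denom q := by
    obtain ⟨c, r, hc, hr⟩ := h.denom q
    exact ⟨c, isRegElem_iff_mem_nonZeroDivisors.1 hc, r, hr⟩

theorem accLeftAnnihilators_of_injective {A B : Type*} [Ring A] [Ring B] [IsNoetherianRing B]
    {ψ : A →+* B} (hψ : Injective ψ) : ACCLeftAnnihilators A := by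
  intro f hf hmono
  let L (i : ℕ) : Ideal B := ⨅ x ∈ {x : A | ∀ y ∈ f i, y * x = 0}, Ideal.torsionOf B B (ψ x)
  have hfL : ∀ i a, a ∈ f i ↔ ψ a ∈ L i := fun i a => by
    simp only [L, Submodule.mem_iInf, mem_torsionOf_self_iff, ← map_mul, map_eq_zero_iff ψ hψ,
      Set.mem_ofPred_eq]
    obtain ⟨S, hS⟩ := hf i
    refine ⟨fun ha x hx => hx a ha, fun ha => ?_⟩
    rw [hS] at ha ⊢
    exact fun s hs => ha s fun y hy => hy s hs
  have hL : Monotone L := fun i j hij =>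
    biInf_mono fun x hx y hy => hx y (hmono i j hij hy)
  obtain ⟨N, hN⟩ := monotone_stabilizes_iff_noetherian.2 (inferInstance : IsNoetherian B B) ⟨L, hL⟩
  refine ⟨N, fun k hk => Set.ext fun a => ?_⟩
  rw [hfL, hfL]
  exact (SetLike.ext_iff.1 (hN k hk) _).symm

theorem IsLeftFractionMap.isLeftGoldie {A B : Type*} [Ring A] [Ring B] [IsNoetherianRing B]
    {S : Submonoid A} {ψ : A →+* B} (h : IsLeftFractionMap S ψ) (hψ : Injective ψ) :
    IsLeftGoldie A :=
  ⟨accLeftAnnihilators_of_injective hψ,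
    (h.noInfiniteIndepFamily_iff (ι := ψ.toSemilinearMap) ⟨hψ, h.denom⟩).2
      noInfiniteIndepFamily_of_isNoetherian⟩

theorem exists_injective_factor {R Q M P N : Type*} [Ring R] [Ring Q] [AddCommGroup M] [Module R M]
    [AddCommGroup P] [Module R P] [AddCommGroup N] [Module Q N] {φ : R →+* Q} {q : M →ₗ[R] P}
    (hq : Surjective q) {g : M →ₛₗ[φ] N} (hg : ∀ x, g x = 0 ↔ q x = 0) :
    ∃ ι : P →ₛₗ[φ] N, Injective ι ∧ ∀ x, ι (q x) = g x := by
  have hker : LinearMap.ker g = LinearMap.ker q := Submodule.ext hg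
  let e := q.quotKerEquivOfSurjective hq
  have he : ∀ x, e.symm (q x) = Submodule.Quotient.mk x := fun x => e.symm_apply_eq.2 rfl
  refine ⟨((LinearMap.ker q).liftQ g hker.ge).comp e.symm.toLinearMap, ?_, fun x => ?_⟩
  · have hinj : Injective ((LinearMap.ker q).liftQ g hker.ge) :=
      LinearMap.ker_eq_bot.1 (Submodule.ker_liftQ_eq_bot _ _ _ hker.le)
    exact hinj.comp e.symm.injective
  · rw [LinearMap.comp_apply, LinearEquiv.coe_coe, he, Submodule.liftQ_apply]

theorem IsSemiprimeNC.exists_ore {A : Type*} [Ring A] (hA : IsSemiprimeNC A) (hG : IsLeftGoldie A)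
    (a : A) {s : A} (hs : IsRegElem s) : ∃ t, IsRegElem t ∧ ∃ b, t * a = b * s := by
  have hs0 : Ideal.torsionOf A A s = ⊥ :=
    (Submodule.eq_bot_iff _).2 fun x hx => hs.2 x (mem_torsionOf_self_iff.1 hx)
  obtain ⟨t, ht, htreg⟩ := hA.exists_isRegElem_mem hG
    ((hG.2.isEssential_span_singleton hs0).comap (LinearMap.toSpanSingleton A A a))
  obtain ⟨b, hb⟩ := Ideal.mem_span_singleton'.1 ht
  exact ⟨t, htreg, b, hb.symm⟩

/-! ### The torsionfree pieces `f_i` and their localizations -/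

section TorsionFreePieces

variable {R Rbar : Type*} [Ring R] [Ring Rbar]

/-- The multiplicative set `C' = π⁻¹(C̄)`. -/
def regularPreimage (π : R →+* Rbar) : Submonoid R := (nonZeroDivisors Rbar).comap π

/-- The projection `n^i → f_i`, bundling `fMk` as a linear map. -/
def fMkHom (π : R →+* Rbar) (i : ℕ) : ↥(primeRadical R ^ i) →ₗ[R] fMod π i :=
  (tauSub π i).mkQ ∘ₗ Submodule.mkQ _

/-- The subquotient `C⁻¹n^i/C⁻¹n^{i+1}` of a ring of fractions `Q` of `R`, the ideal `C⁻¹n^i` being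
written as the left ideal of `Q` generated by the image of `n^i`. -/
abbrev locPiece {Q : Type*} [Ring Q] (φ : R →+* Q) (i : ℕ) :=
  ↥((primeRadical R ^ i).map φ) ⧸
    Submodule.comap ((primeRadical R ^ i).map φ).subtype ((primeRadical R ^ (i + 1)).map φ)

/-- `π : R → R̄` realizes `R̄` as the quotient `R/n` by the prime radical, and `R̄` is left
Goldie. -/
structure IsGoldieReduction (π : R →+* Rbar) : Prop where
  surjective : Surjective π
  ker_eq : RingHom.ker π = primeRadical R
  isLeftGoldie : IsLeftGoldie Rbar

variable {π : R →+* Rbar} {i : ℕ}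

theorem mem_regularPreimage {c : R} : c ∈ regularPreimage π ↔ IsRegElem (π c) :=
  isRegElem_iff_mem_nonZeroDivisors.symm

theorem fMkHom_surjective : Surjective (fMkHom π i) :=
  (Submodule.mkQ_surjective _).comp (Submodule.mkQ_surjective _)

theorem smul_grPiece_eq_zero {a : R} (ha : a ∈ primeRadical R) (u : grPiece R i) : a • u = 0 := by
  obtain ⟨x, rfl⟩ := Submodule.Quotient.mk_surjective _ u
  rw [← Submodule.Quotient.mk_smul, Submodule.Quotient.mk_eq_zero, Submodule.mem_comap,
    Ideal.IsTwoSided.pow_succ]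
  exact Ideal.mul_mem_mul ha x.2

theorem smul_fMod_eq_zero {a : R} (ha : a ∈ primeRadical R) (u : fMod π i) : a • u = 0 := by
  obtain ⟨u, rfl⟩ := Submodule.Quotient.mk_surjective _ u
  rw [← Submodule.Quotient.mk_smul, smul_grPiece_eq_zero ha, Submodule.Quotient.mk_zero]

namespace IsGoldieReduction

theorem map_eq_zero_iff (hπ : IsGoldieReduction π) {a : R} : π a = 0 ↔ a ∈ primeRadical R := by
  rw [← hπ.ker_eq, RingHom.mem_ker]

theorem isSemiprimeNC (hπ : IsGoldieReduction π) : IsSemiprimeNC Rbar :=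
  isSemiprimeNC_of_ker_eq_primeRadical hπ.surjective hπ.ker_eq

theorem exists_ore_modulo_primeRadical (hπ : IsGoldieReduction π) (a : R) {s : R}
    (hs : s ∈ regularPreimage π) :
    ∃ t ∈ regularPreimage π, ∃ b, t * a - b * s ∈ primeRadical R := by
  obtain ⟨t, ht, b, hb⟩ :=
    hπ.isSemiprimeNC.exists_ore hπ.isLeftGoldie (π a) (mem_regularPreimage.1 hs)
  obtain ⟨t, rfl⟩ := hπ.surjective t
  obtain ⟨b, rfl⟩ := hπ.surjective b
  refine ⟨t, mem_regularPreimage.2 ht, b, ?_⟩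
  rw [← hπ.map_eq_zero_iff, map_sub, map_mul, map_mul, hb, sub_self]

theorem exists_smul_mem_of_isEssential (hπ : IsGoldieReduction π) {M : Type*} [AddCommGroup M]
    [Module R M] (hM : ∀ a ∈ primeRadical R, ∀ m : M, a • m = 0) {E : Submodule R M}
    (hE : IsEssential E) (m : M) : ∃ c ∈ regularPreimage π, c • m ∈ E := by
  let I : Ideal R := E.comap (LinearMap.toSpanSingleton R M m)
  have hI : IsEssential (I.map π) := by
    refine isEssential_iff.2 fun x hx => ?_
    obtain ⟨x, rfl⟩ := hπ.surjective x
    by_cases hxm : x • m = 0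
    · refine ⟨1, by rwa [one_smul], ?_⟩
      rw [one_smul]
      exact Ideal.mem_map_of_mem π (show x • m ∈ E from hxm ▸ E.zero_mem)
    · obtain ⟨r, hr, hrE⟩ := isEssential_iff.1 hE _ hxm
      rw [← mul_smul] at hr hrE
      refine ⟨π r, fun h0 => hr (hM _ ?_ m), ?_⟩
      · rwa [← hπ.map_eq_zero_iff, map_mul]
      · rw [smul_eq_mul, ← map_mul]
        exact Ideal.mem_map_of_mem π (show (r * x) • m ∈ E from hrE)
  obtain ⟨c, hcI, hc⟩ := hπ.isSemiprimeNC.exists_isRegElem_mem hπ.isLeftGoldie hI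
  obtain ⟨c, hcE, rfl⟩ := (Ideal.mem_map_iff_of_surjective π hπ.surjective).1 hcI
  exact ⟨c, mem_regularPreimage.2 hc, hcE⟩

theorem mem_tauSub_iff (hπ : IsGoldieReduction π) {u : grPiece R i} :
    u ∈ tauSub π i ↔ ∃ c ∈ regularPreimage π, c • u = 0 := by
  refine ⟨fun hu => ?_, fun ⟨c, hc, hcu⟩ =>
    Submodule.subset_span ⟨c, mem_regularPreimage.1 hc, hcu⟩⟩
  have hore : ∀ {t a b s : R} {v : grPiece R i}, t * a - b * s ∈ primeRadical R → s • v = 0 →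
      (t * a) • v = 0 := fun {t a b s v} hn hv => by
    rw [← sub_add_cancel (t * a) (b * s), add_smul, smul_grPiece_eq_zero hn, mul_smul, hv,
      smul_zero, add_zero]
  induction hu using Submodule.span_induction with
  | mem u hu =>
    obtain ⟨c, hc, hcu⟩ := hu
    exact ⟨c, mem_regularPreimage.2 hc, hcu⟩
  | zero => exact ⟨1, Submonoid.one_mem _, smul_zero 1⟩
  | add u v _ _ hu hv =>
    obtain ⟨c, hc, hcu⟩ := hu
    obtain ⟨d, hd, hdv⟩ := hv
    obtain ⟨t, ht, b, hb⟩ := hπ.exists_ore_modulo_primeRadical c hd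
    refine ⟨t * c, Submonoid.mul_mem _ ht hc, ?_⟩
    rw [smul_add, hore hb hdv, mul_smul, hcu, smul_zero, add_zero]
  | smul r u _ hu =>
    obtain ⟨c, hc, hcu⟩ := hu
    obtain ⟨t, ht, b, hb⟩ := hπ.exists_ore_modulo_primeRadical r hc
    exact ⟨t, ht, by rw [smul_smul, hore hb hcu]⟩

theorem fMkHom_eq_zero_iff (hπ : IsGoldieReduction π) {x : ↥(primeRadical R ^ i)} :
    fMkHom π i x = 0 ↔ ∃ c ∈ regularPreimage π, c * (x : R) ∈ primeRadical R ^ (i + 1) := by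
  rw [fMkHom, LinearMap.comp_apply, Submodule.mkQ_apply, Submodule.Quotient.mk_eq_zero,
    hπ.mem_tauSub_iff]
  simp only [Submodule.mkQ_apply, ← Submodule.Quotient.mk_smul, Submodule.Quotient.mk_eq_zero,
    Submodule.mem_comap, Submodule.subtype_apply, SetLike.val_smul, smul_eq_mul]

theorem fMkHom_zero_eq_zero_iff (hπ : IsGoldieReduction π) {x : ↥(primeRadical R ^ 0)} :
    fMkHom π 0 x = 0 ↔ π x = 0 := by
  rw [hπ.fMkHom_eq_zero_iff, zero_add, Submodule.pow_one]
  constructor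
  · rintro ⟨c, hc, hcx⟩
    rw [← hπ.map_eq_zero_iff, map_mul] at hcx
    exact (mem_regularPreimage.1 hc).1 _ hcx
  · intro hx
    exact ⟨1, Submonoid.one_mem _, by rwa [one_mul, ← hπ.map_eq_zero_iff]⟩

theorem noInfiniteIndepFamily_fMod_zero (hπ : IsGoldieReduction π) :
    NoInfiniteIndepFamily R (fMod π 0) := by
  obtain ⟨ι, hι, hιx⟩ := exists_injective_factor (fMkHom_surjective (π := π) (i := 0))
    (g := π.toSemilinearMap.comp (primeRadical R ^ 0).subtype)
    fun x => hπ.fMkHom_zero_eq_zero_iff.symm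
  refine ((IsLeftFractionMap.of_surjective hπ.surjective).noInfiniteIndepFamily_iff
    ⟨hι, fun y => ?_⟩).2 hπ.isLeftGoldie.2
  obtain ⟨x, rfl⟩ := hπ.surjective y
  refine ⟨1, Submonoid.one_mem _, fMkHom π 0 ⟨x, ?_⟩, ?_⟩
  · rw [Submodule.pow_zero, Ideal.one_eq_top]
    exact Submodule.mem_top
  · rw [map_one, one_smul, hιx]
    rfl

variable {Q : Type*} [Ring Q] {φ : R →+* Q}

theorem fMkHom_eq_zero_iff_map_mem (hπ : IsGoldieReduction π)
    (h : IsLeftFractionMap (regularPreimage π) φ) (hφ : Injective φ) {x : ↥(primeRadical R ^ i)} :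
    fMkHom π i x = 0 ↔ φ x ∈ (primeRadical R ^ (i + 1)).map φ := by
  rw [hπ.fMkHom_eq_zero_iff, h.map_mem_map_iff hφ]

theorem exists_isNumeratorEmbedding_locPiece (hπ : IsGoldieReduction π)
    (h : IsLeftFractionMap (regularPreimage π) φ) (hφ : Injective φ) (i : ℕ) :
    ∃ ι : fMod π i →ₛₗ[φ] locPiece φ i, IsNumeratorEmbedding (regularPreimage π) ι := by
  let g : ↥(primeRadical R ^ i) →ₛₗ[φ] locPiece φ i := (Submodule.mkQ _).comp
    ((φ.toSemilinearMap.comp (primeRadical R ^ i).subtype).codRestrict _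
      fun x => Ideal.mem_map_of_mem φ x.2)
  obtain ⟨ι, hι, hιx⟩ := exists_injective_factor (g := g) (fMkHom_surjective (π := π)) fun x =>
    (Submodule.Quotient.mk_eq_zero _).trans (hπ.fMkHom_eq_zero_iff_map_mem h hφ).symm
  refine ⟨ι, hι, fun n => ?_⟩
  obtain ⟨⟨q, hq⟩, rfl⟩ := Submodule.Quotient.mk_surjective _ n
  obtain ⟨s, hs, a, ha, hsq⟩ := h.mem_map_iff.1 hq
  refine ⟨s, hs, fMkHom π i ⟨a, ha⟩, ?_⟩
  rw [hιx, ← Submodule.Quotient.mk_smul]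
  exact congrArg _ (Subtype.ext hsq)

theorem noInfiniteIndepFamily_fMod_iff (hπ : IsGoldieReduction π)
    (h : IsLeftFractionMap (regularPreimage π) φ) (hφ : Injective φ) :
    NoInfiniteIndepFamily R (fMod π i) ↔ NoInfiniteIndepFamily Q (locPiece φ i) := by
  obtain ⟨ι, hι⟩ := hπ.exists_isNumeratorEmbedding_locPiece h hφ i
  exact h.noInfiniteIndepFamily_iff hι

theorem isArtinian_locPiece (hπ : IsGoldieReduction π)
    (h : IsLeftFractionMap (regularPreimage π) φ) (hφ : Injective φ)
    (hind : NoInfiniteIndepFamily R (fMod π i)) : IsArtinian Q (locPiece φ i) := by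
  obtain ⟨ι, hι⟩ := hπ.exists_isNumeratorEmbedding_locPiece h hφ i
  have := h.isSemisimpleModule hι fun E hE =>
    hπ.exists_smul_mem_of_isEssential (fun _ ha => smul_fMod_eq_zero ha) hE
  exact ((hπ.noInfiniteIndepFamily_fMod_iff h hφ).1 hind).isArtinian

end IsGoldieReduction

end TorsionFreePieces

/-! ### Construction of the left Artinian left quotient ring -/

section Sufficiency

variable {R : Type u} {Rbar : Type v} [Ring R] [Ring Rbar]

theorem exists_isLeftFractionMap_of_ore (S : Submonoid R)
    (hS : ∀ s ∈ S, IsRegElem s) (hore : ∀ (a : R), ∀ s ∈ S, ∃ t ∈ S, ∃ b : R, t * a = b * s) :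
    ∃ (Q : Type u) (_ : Ring Q) (φ : R →+* Q), Injective φ ∧ IsLeftFractionMap S φ := by
  choose! t ht b hb using hore
  let _ : OreLocalization.OreSet S :=
    { ore_right_cancel := fun r₁ r₂ s h => by
        rw [← sub_eq_zero, ← sub_mul] at h
        exact ⟨1, by rw [sub_eq_zero.1 ((hS s s.2).2 _ h)]⟩
      oreNum := fun r s => b r s
      oreDenom := fun r s => ⟨t r s, ht r s s.2⟩
      ore_eq := fun r s => hb r s s.2 }
  have hle : S ≤ nonZeroDivisorsLeft R := fun s hs =>
    (mem_nonZeroDivisorsLeft_iff R).2 (hS s hs).1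
  refine ⟨OreLocalization S R, inferInstance, OreLocalization.numeratorRingHom,
    OreLocalization.numeratorHom_inj hle,
    fun s hs => OreLocalization.numerator_isUnit ⟨s, hs⟩, fun q => ?_⟩
  induction q using OreLocalization.ind with
  | _ r s => exact ⟨s, s.2, r, OreLocalization.mul_cancel⟩

/-- Right multiplication by `s` on the left ideal `n^i`. -/
def mulRightPow (i : ℕ) (s : R) : Module.End R ↥(primeRadical R ^ i) :=
  (LinearMap.toSpanSingleton R R s).restrict fun _ hx => Ideal.mul_mem_right s _ hx

/-- Every element of `C̄` acts injectively on `f_i` by right multiplication. The action is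
expressed on representatives in `n^i`, so that it need not be constructed beforehand. -/
def IsRightTorsionFree (π : R →+* Rbar) (i : ℕ) : Prop :=
  ∀ s ∈ regularPreimage π, ∀ x : ↥(primeRadical R ^ i),
    fMkHom π i (mulRightPow i s x) = 0 → fMkHom π i x = 0

variable {π : R →+* Rbar} {i : ℕ}

theorem subsingleton_fMod (hi : primeRadical R ^ i = ⊥) : Subsingleton (fMod π i) :=
  have := (Submodule.subsingleton_iff_eq_bot).2 hi
  fMkHom_surjective.subsingleton

theorem noInfiniteIndepFamily_fMod_of_pow_eq_bot (hi : primeRadical R ^ i = ⊥) :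
    NoInfiniteIndepFamily R (fMod π i) :=
  have := subsingleton_fMod (π := π) hi
  noInfiniteIndepFamily_of_isNoetherian

theorem isRightTorsionFree_of_pow_eq_bot (hi : primeRadical R ^ i = ⊥) :
    IsRightTorsionFree π i := fun _ _ _ _ =>
  have := subsingleton_fMod (π := π) hi
  Subsingleton.elim _ _

theorem isRightTorsionFree_iff : IsRightTorsionFree π i ↔ ∀ c : R, IsRegElem (π c) →
    ∀ (x : R) (hx : x ∈ primeRadical R ^ i) (hxc : x * c ∈ primeRadical R ^ i),
      fMk π i (x * c) hxc = 0 → fMk π i x hx = 0 :=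
  ⟨fun h c hc x hx _ => h c (mem_regularPreimage.2 hc) ⟨x, hx⟩,
    fun h c hc x => h c (mem_regularPreimage.1 hc) x x.2 (mulRightPow i c x).2⟩

namespace IsGoldieReduction

theorem isRightTorsionFree_zero (hπ : IsGoldieReduction π) : IsRightTorsionFree π 0 := by
  intro s hs x hx
  rw [hπ.fMkHom_zero_eq_zero_iff] at hx ⊢
  exact (mem_regularPreimage.1 hs).2 _ ((map_mul π _ _).symm.trans hx)

theorem noInfiniteIndepFamily_fMod (hπ : IsGoldieReduction π)
    (hind : ∀ i, 1 ≤ i → primeRadical R ^ i ≠ ⊥ → NoInfiniteIndepFamily R (fMod π i)) (i : ℕ) :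
    NoInfiniteIndepFamily R (fMod π i) := by
  obtain rfl | hi := i.eq_zero_or_pos
  · exact hπ.noInfiniteIndepFamily_fMod_zero
  by_cases hbot : primeRadical R ^ i = ⊥
  · exact noInfiniteIndepFamily_fMod_of_pow_eq_bot hbot
  · exact hind i hi hbot

theorem isRightTorsionFree (hπ : IsGoldieReduction π)
    (htf : ∀ i, 1 ≤ i → primeRadical R ^ i ≠ ⊥ → IsRightTorsionFree π i) (i : ℕ) :
    IsRightTorsionFree π i := by
  obtain rfl | hi := i.eq_zero_or_pos
  · exact hπ.isRightTorsionFree_zero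
  by_cases hbot : primeRadical R ^ i = ⊥
  · exact isRightTorsionFree_of_pow_eq_bot hbot
  · exact htf i hi hbot

theorem fMkHom_mulRightPow_eq_zero (hπ : IsGoldieReduction π) (s : R)
    {x : ↥(primeRadical R ^ i)} (hx : fMkHom π i x = 0) : fMkHom π i (mulRightPow i s x) = 0 := by
  obtain ⟨c, hc, hcx⟩ := hπ.fMkHom_eq_zero_iff.1 hx
  refine hπ.fMkHom_eq_zero_iff.2 ⟨c, hc, ?_⟩
  exact (mul_assoc c _ s) ▸ Ideal.mul_mem_right s _ hcx

/-- Right multiplication by `s` is an injective endomorphism of `f_i`, so its range is essential and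
hence contains a left multiple by an element of `C'` of each element of `f_i`. -/
theorem exists_ore_modulo_pow_succ (hπ : IsGoldieReduction π)
    (hind : NoInfiniteIndepFamily R (fMod π i)) (htf : IsRightTorsionFree π i) {x s : R}
    (hx : x ∈ primeRadical R ^ i) (hs : s ∈ regularPreimage π) :
    ∃ t ∈ regularPreimage π, ∃ b, t * x - b * s ∈ primeRadical R ^ (i + 1) := by
  obtain ⟨f, hf, hfx⟩ := exists_injective_factor (fMkHom_surjective (π := π) (i := i))
    (g := fMkHom π i ∘ₗ mulRightPow i s)
    fun x => ⟨htf s hs x, hπ.fMkHom_mulRightPow_eq_zero s⟩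
  obtain ⟨c, hc, y, hy⟩ := hπ.exists_smul_mem_of_isEssential
    (fun _ ha => smul_fMod_eq_zero ha) (hind.isEssential_range hf) (fMkHom π i ⟨x, hx⟩)
  obtain ⟨y, rfl⟩ := fMkHom_surjective y
  rw [hfx, LinearMap.comp_apply, ← map_smul, eq_comm, ← sub_eq_zero, ← map_sub] at hy
  obtain ⟨d, hd, hdy⟩ := hπ.fMkHom_eq_zero_iff.1 hy
  refine ⟨d * c, Submonoid.mul_mem _ hd hc, d * y, ?_⟩
  rw [mul_assoc, mul_assoc, ← mul_sub]
  exact hdy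

theorem exists_ore (hπ : IsGoldieReduction π) (hnil : IsNilpotentIdeal (primeRadical R))
    (hind : ∀ i, NoInfiniteIndepFamily R (fMod π i)) (htf : ∀ i, IsRightTorsionFree π i)
    (a : R) {s : R} (hs : s ∈ regularPreimage π) :
    ∃ t ∈ regularPreimage π, ∃ b, t * a = b * s := by
  have hmod : ∀ i, ∃ t ∈ regularPreimage π, ∃ b, t * a - b * s ∈ primeRadical R ^ i := by
    intro i
    induction i with
    | zero =>
      refine ⟨1, Submonoid.one_mem _, 0, ?_⟩
      rw [Submodule.pow_zero, Ideal.one_eq_top]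
      exact Submodule.mem_top
    | succ i ih =>
      obtain ⟨t, ht, b, hb⟩ := ih
      obtain ⟨t', ht', b', hb'⟩ := hπ.exists_ore_modulo_pow_succ (hind i) (htf i) hb hs
      refine ⟨t' * t, Submonoid.mul_mem _ ht' ht, t' * b + b', ?_⟩
      convert hb' using 1
      noncomm_ring
  obtain ⟨k, hk⟩ := hnil
  obtain ⟨t, ht, b, hb⟩ := hmod (k + 1)
  rw [hk, Submodule.mem_bot, sub_eq_zero] at hb
  exact ⟨t, ht, b, hb⟩

theorem hasArtinianLeftQuot (hπ : IsGoldieReduction π)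
    (hnil : IsNilpotentIdeal (primeRadical R)) (hreg : ∀ c, IsRegElem (π c) → IsRegElem c)
    (hind : ∀ i, NoInfiniteIndepFamily R (fMod π i)) (htf : ∀ i, IsRightTorsionFree π i) :
    HasArtinianLeftQuot R := by
  obtain ⟨Q, _, φ, hφ, h⟩ := exists_isLeftFractionMap_of_ore (regularPreimage π)
    (fun s hs => hreg s (mem_regularPreimage.1 hs)) fun a s hs => hπ.exists_ore hnil hind htf a hs
  obtain ⟨k, hk⟩ := hnil
  have hQ : IsArtinianRing Q := by
    refine isArtinianRing_of_filtration (fun i => (primeRadical R ^ i).map φ)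
      (fun i => Ideal.map_mono (Ideal.pow_le_pow_right i.le_succ)) ?_ (k := k + 1) ?_
      fun i => hπ.isArtinian_locPiece h hφ (hind i)
    · rw [Submodule.pow_zero, Ideal.one_eq_top, Ideal.map_top]
    · rw [hk, Ideal.map_bot]
  exact ⟨⟨Q, φ, h.isLeftQuotRing hφ⟩, hQ⟩

end IsGoldieReduction

end Sufficiency

/-! ### Consequences of having a left Artinian left quotient ring -/

namespace IsLeftQuotRing

variable {R : Type u} {Q : Type*} [Ring R] [Ring Q] {φ : R →+* Q}

theorem small (h : IsLeftQuotRing φ) : Small.{u} Q := by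
  choose c r hc hr using h.denom
  refine small_of_injective (β := R × R) (f := fun q => (c q, r q)) fun q q' hqq' => ?_
  obtain ⟨hcc, hrr⟩ := Prod.mk.inj hqq'
  refine (h.isUnit (c q) (hc q)).mul_left_cancel ?_
  rw [hr, hrr, ← hr, hcc]

theorem ringEquiv_comp {Q' : Type*} [Ring Q'] (h : IsLeftQuotRing φ) (e : Q ≃+* Q') :
    IsLeftQuotRing ((e : Q →+* Q').comp φ) where
  inj := e.injective.comp h.inj
  isUnit c hc := (h.isUnit c hc).map e
  denom q := by
    obtain ⟨c, r, hc, hr⟩ := h.denom (e.symm q)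
    exact ⟨c, r, hc, by simp [← hr]⟩

theorem coe_map_eq_locSet (h : IsLeftQuotRing φ) (K : Ideal R) :
    (K.map φ : Set Q) = locSet φ K := by
  ext q
  rw [SetLike.mem_coe, h.isLeftFractionMap.mem_map_iff]
  constructor
  · rintro ⟨s, hs, a, ha, hsq⟩
    exact ⟨s, a, isRegElem_iff_mem_nonZeroDivisors.2 hs, ha, hsq⟩
  · rintro ⟨s, a, hs, ha, hsq⟩
    exact ⟨s, isRegElem_iff_mem_nonZeroDivisors.1 hs, a, ha, hsq⟩

variable {Rbar : Type*} [Ring Rbar] [IsArtinianRing Q] {π : R →+* Rbar} {i : ℕ}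

theorem primeRadical_eq_locSet (h : IsLeftQuotRing φ) :
    (primeRadical Q : Set Q) = locSet φ (primeRadical R) := by
  have hn := h.isLeftFractionMap.map_primeRadical_pow h.inj 1
  rw [Submodule.pow_one, Submodule.pow_one] at hn
  rw [← hn, h.coe_map_eq_locSet]

theorem exists_isLeftQuotRing_reduction (h : IsLeftQuotRing φ) (hπ : Surjective π)
    (hker : RingHom.ker π = primeRadical R) :
    ∃ ψ : Rbar →+* Q ⧸ primeRadical Q,
      IsLeftQuotRing ψ ∧ ψ.comp π = (Ideal.Quotient.mk (primeRadical Q)).comp φ := by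
  have hφ : RingHom.ker ((Ideal.Quotient.mk (primeRadical Q)).comp φ) = RingHom.ker π := by
    rw [← RingHom.comap_ker, Ideal.mk_ker, h.isLeftFractionMap.comap_primeRadical h.inj, hker]
  let ψ : Rbar →+* Q ⧸ primeRadical Q := π.liftOfSurjective hπ ⟨_, hφ.ge⟩
  have hψ : ψ.comp π = (Ideal.Quotient.mk (primeRadical Q)).comp φ :=
    π.liftOfRightInverse_comp _ _ _
  have hinj : Injective ψ := (injective_iff_map_eq_zero ψ).2 fun x hx => by
    obtain ⟨x, rfl⟩ := hπ x
    rwa [← RingHom.comp_apply, hψ, ← RingHom.mem_ker, hφ, RingHom.mem_ker] at hx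
  have hfrac := h.isLeftFractionMap.comp_surjective
    (Ideal.Quotient.mk_surjective (I := primeRadical Q))
  exact ⟨ψ, (IsLeftFractionMap.of_comp (hψ ▸ hfrac)).isLeftQuotRing hinj, hψ⟩

theorem exists_leftQuotData_reduction {Rbar : Type v} [Ring Rbar] {π : R →+* Rbar}
    (h : IsLeftQuotRing φ) (hπ : Surjective π) (hker : RingHom.ker π = primeRadical R) :
    ∃ (e : LeftQuotData Rbar) (θ : Q →+* e.Q),
      Surjective θ ∧ RingHom.ker θ = primeRadical Q ∧ θ.comp φ = e.φ.comp π := by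
  obtain ⟨ψ, hψ, hψπ⟩ := h.exists_isLeftQuotRing_reduction hπ hker
  have := hψ.small
  let e : Q ⧸ primeRadical Q ≃+* Shrink.{v} (Q ⧸ primeRadical Q) := (Shrink.ringEquiv _).symm
  let θ : Q →+* Shrink.{v} (Q ⧸ primeRadical Q) :=
    e.toRingHom.comp (Ideal.Quotient.mk (primeRadical Q))
  refine ⟨⟨_, e.toRingHom.comp ψ, hψ.ringEquiv_comp e⟩, θ,
    e.surjective.comp Ideal.Quotient.mk_surjective, ?_, ?_⟩
  · rw [RingHom.ker_equiv_comp, Ideal.mk_ker]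
  · rw [RingHom.comp_assoc, RingHom.comp_assoc, hψπ]

theorem isGoldieReduction (h : IsLeftQuotRing φ) (hπ : Surjective π)
    (hker : RingHom.ker π = primeRadical R) : IsGoldieReduction π := by
  obtain ⟨ψ, hψ, -⟩ := h.exists_isLeftQuotRing_reduction hπ hker
  exact ⟨hπ, hker, hψ.isLeftFractionMap.isLeftGoldie hψ.inj⟩

/-- An element of the Artinian ring `Q` is a unit as soon as it is one modulo the nilpotent ideal
`primeRadical Q`, and the regular elements of `R` and of `R̄` are those that become units. -/
theorem isRegElem_map_iff (h : IsLeftQuotRing φ) (hπ : Surjective π)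
    (hker : RingHom.ker π = primeRadical R) {c : R} : IsRegElem (π c) ↔ IsRegElem c := by
  obtain ⟨ψ, hψ, hψπ⟩ := h.exists_isLeftQuotRing_reduction hπ hker
  rw [hψ.isLeftFractionMap.isRegElem_iff_isUnit_map hψ.inj, ← RingHom.comp_apply, hψπ,
    RingHom.comp_apply, h.isLeftFractionMap.isRegElem_iff_isUnit_map h.inj]
  exact ⟨isNilpotentIdeal_primeRadical.isUnit_of_isUnit_mk, fun hc => hc.map _⟩

theorem isLeftFractionMap_regularPreimage (h : IsLeftQuotRing φ) (hπ : Surjective π)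
    (hker : RingHom.ker π = primeRadical R) : IsLeftFractionMap (regularPreimage π) φ := by
  have hS : regularPreimage π = nonZeroDivisors R := Submonoid.ext fun c => by
    rw [mem_regularPreimage, h.isRegElem_map_iff hπ hker, isRegElem_iff_mem_nonZeroDivisors]
  exact hS ▸ h.isLeftFractionMap

theorem noInfiniteIndepFamily_fMod (h : IsLeftQuotRing φ) (hπ : Surjective π)
    (hker : RingHom.ker π = primeRadical R) : NoInfiniteIndepFamily R (fMod π i) :=
  ((h.isGoldieReduction hπ hker).noInfiniteIndepFamily_fMod_iff
    (h.isLeftFractionMap_regularPreimage hπ hker) h.inj).2 noInfiniteIndepFamily_of_isNoetherian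

theorem isRightTorsionFree (h : IsLeftQuotRing φ) (hπ : Surjective π)
    (hker : RingHom.ker π = primeRadical R) : IsRightTorsionFree π i := by
  have hred := h.isGoldieReduction hπ hker
  have hfrac := h.isLeftFractionMap_regularPreimage hπ hker
  have := hfrac.map_isTwoSided (primeRadical R ^ (i + 1))
  intro s hs x hx
  rw [hred.fMkHom_eq_zero_iff_map_mem hfrac h.inj] at hx ⊢
  refine (mul_mem_iff_of_isUnit (hfrac.isUnit s hs) fun y hy => Ideal.mul_mem_right _ _ hy).1 ?_
  rwa [← map_mul]

theorem isNilpotentIdeal_primeRadical_base (h : IsLeftQuotRing φ) :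
    IsNilpotentIdeal (primeRadical R) := by
  obtain ⟨k, hk⟩ := isNilpotentIdeal_primeRadical (R := Q)
  exact ⟨k, (h.isLeftFractionMap.primeRadical_pow_eq_bot_iff h.inj _).1 hk⟩

end IsLeftQuotRing

/-- **Theorem (Bavula, Theorem 2 / `2Sep12`).**
Let `R` be a ring, `n` its prime radical, `R̄ = R/n` (realized by a surjective ring
homomorphism `π : R → R̄` with kernel `n`).  The following are equivalent:
(1) `R` has a left Artinian left quotient ring `Q = C⁻¹R`;
(2) (a) `R̄` is a left Goldie ring, (b) `n` is a nilpotent ideal, (c) `C' ⊆ C`,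
(d) for every `1 ≤ i ≤ ν` the left `R̄`-module `f_i` contains no infinite direct sum of
nonzero submodules, and (e) for every `c̄ ∈ C̄` right multiplication by `c̄` on `f_i` is
injective for all `1 ≤ i ≤ ν` (the range `1 ≤ i ≤ ν` is encoded as `1 ≤ i` and `n^i ≠ ⊥`).
Moreover, if these conditions hold then `C = C'`, `C⁻¹n` is the prime radical of `Q` and is
nilpotent of nilpotency degree `ν` (encoded: `(primeRadical Q)^k = ⊥ ↔ n^k = ⊥` for all `k`),
and the map `Q/C⁻¹n → Q̄`, `c⁻¹r + C⁻¹n ↦ c̄⁻¹r̄`, is a ring isomorphism (encoded by a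
surjective ring homomorphism `θ : Q → Q̄` with kernel `C⁻¹n` satisfying `θ ∘ φ = ψ ∘ π`). -/
theorem left_artinian_left_quotient_ring_criterion
    {R : Type u} [Ring R] (Rbar : Type v) [Ring Rbar] (π : R →+* Rbar)
    (hπsurj : Function.Surjective π) (hπker : RingHom.ker π = primeRadical R) :
    (HasArtinianLeftQuot R ↔
      (IsLeftGoldie Rbar ∧
        IsNilpotentIdeal (primeRadical R) ∧
        (∀ c : R, IsRegElem (π c) → IsRegElem c) ∧
        (∀ i : ℕ, 1 ≤ i → primeRadical R ^ i ≠ ⊥ → NoInfiniteIndepFamily R (fMod π i)) ∧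
        (∀ i : ℕ, 1 ≤ i → primeRadical R ^ i ≠ ⊥ →
          ∀ c : R, IsRegElem (π c) →
            ∀ (x : R) (hx : x ∈ primeRadical R ^ i) (hxc : x * c ∈ primeRadical R ^ i),
              fMk π i (x * c) hxc = 0 → fMk π i x hx = 0))) ∧
    (HasArtinianLeftQuot R →
      (regSet R = {c : R | IsRegElem (π c)}) ∧
      ∀ d : LeftQuotData R, IsArtinianRing d.Q →
        ((↑(primeRadical d.Q) : Set d.Q) = locSet d.φ (primeRadical R)) ∧
        IsNilpotentIdeal (primeRadical d.Q) ∧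
        (∀ k : ℕ, primeRadical d.Q ^ k = ⊥ ↔ primeRadical R ^ k = ⊥) ∧
        ∃ (e : LeftQuotData Rbar) (θ : d.Q →+* e.Q),
          Function.Surjective θ ∧ RingHom.ker θ = primeRadical d.Q ∧
            θ.comp d.φ = e.φ.comp π) := by
  constructor
  · constructor
    · rintro ⟨d, hd⟩
      exact ⟨(d.quot.isGoldieReduction hπsurj hπker).isLeftGoldie,
        d.quot.isNilpotentIdeal_primeRadical_base,
        fun c => (d.quot.isRegElem_map_iff hπsurj hπker).1,
        fun i _ _ => d.quot.noInfiniteIndepFamily_fMod hπsurj hπker,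
        fun i _ _ => isRightTorsionFree_iff.1 (d.quot.isRightTorsionFree hπsurj hπker)⟩
    · rintro ⟨hG, hnil, hreg, hind, htf⟩
      have hπ : IsGoldieReduction π := ⟨hπsurj, hπker, hG⟩
      exact hπ.hasArtinianLeftQuot hnil hreg (hπ.noInfiniteIndepFamily_fMod hind)
        (hπ.isRightTorsionFree fun i hi hbot => isRightTorsionFree_iff.2 (htf i hi hbot))
  · rintro ⟨d₀, hd₀⟩
    refine ⟨Set.ext fun c => (d₀.quot.isRegElem_map_iff hπsurj hπker).symm, fun d hd => ?_⟩
    exact ⟨d.quot.primeRadical_eq_locSet, isNilpotentIdeal_primeRadical,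
      d.quot.isLeftFractionMap.primeRadical_pow_eq_bot_iff d.quot.inj,
      d.quot.exists_leftQuotData_reduction hπsurj hπker⟩
end

section
/- Let R̄ be a semiprime left Goldie ring with set of regular elements C̄, and let M ⊆ N be C̄-torsionfree left R̄-modules such that udim(M) = udim(N) < ∞ (equal finite uniform dimensions). Then the R̄-module N/M is C̄-torsion, i.e. every element of N/M is annihilated by some element of C̄. -/
open Function

universe u v

/-- There is an independent family of `k` nonzero submodules of `M`. -/
def HasIndepFamily (R : Type*) (M : Type*) [Ring R] [AddCommGroup M] [Module R M]
    (k : ℕ) : Prop :=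
  ∃ f : Fin k → Submodule R M, (∀ i, f i ≠ ⊥) ∧ iSupIndep f

/-- The uniform (Goldie) dimension of `M` equals the (finite) number `d`:  there is an
independent family of `d` nonzero submodules, but none of `d + 1` nonzero submodules. -/
def UdimEq (R : Type*) (M : Type*) [Ring R] [AddCommGroup M] [Module R M] (d : ℕ) : Prop :=
  HasIndepFamily R M d ∧ ¬ HasIndepFamily R M (d + 1)

/-- A ring is semiprime: it has no nonzero nilpotent (two-sided) ideals. -/
def IsSemiprimeRing (A : Type*) [Ring A] : Prop :=
  ∀ I : Ideal A, I.IsTwoSidedNC → (∃ k : ℕ, I ^ (k + 1) = ⊥) → I = ⊥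

/-!
Equality of the finite uniform dimensions makes `M` essential in `N`: a nonzero submodule of `N`
disjoint from `M` could be added to an independent family in `M`. For `x ∈ N` the left ideal
`{r | r • x ∈ M}` is then essential, being the preimage of `M` under `r ↦ r • x`, and Goldie's
theorem provides a regular element in it.

For Goldie's theorem, let `l(a)` denote the left annihilator of `a`. Among the elements `c` of an
essential left ideal `I` with `A c ∩ l(c) = 0`, the absence of infinite direct sums yields one such
that every smaller `l(e)` is essential in `l(c)`. If `l(c) ≠ 0`, the nonzero left ideal `I ∩ l(c)`
contains some `b ≠ 0` with `A b ∩ l(b) = 0`; then `l(c + b) = l(c) ∩ l(b)` misses `A b ≤ l(c)`,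
contradicting the choice of `c`. So `l(c) = 0`, whence `A c` is essential. If now `c x = 0`, then
`l(x)` is essential, so `x A` is nil by the chain condition on left annihilators, and nonzero nil
right ideals do not exist in a semiprime ring with that condition.
-/

section Independence

variable {α : Type*} [CompleteLattice α] [IsModularLattice α]

theorem iSupIndep_of_antitone_of_disjoint [IsCompactlyGenerated α] {L B : ℕ → α}
    (hL : Antitone L) (hBL : ∀ n, B n ≤ L n) (hdisj : ∀ n, Disjoint (B n) (L (n + 1))) :
    iSupIndep B := by
  rw [iSupIndep_iff_supIndep]
  intro s
  induction s using Finset.induction_on_min with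
  | empty => exact Finset.supIndep_empty B
  | insert n s hn ih =>
    have hs : s.sup B ≤ L (n + 1) := Finset.sup_le fun i hi => (hBL i).trans (hL (hn i hi))
    exact ih.insert ((hdisj n).mono_right hs)

theorem iSupIndep_finCons {n : ℕ} {a : α} {f : Fin n → α} (hf : iSupIndep f)
    (ha : Disjoint a (⨆ i, f i)) : iSupIndep (Fin.cons a f : Fin (n + 1) → α) := by
  rw [iSupIndep_iff_supIndep_univ, Fin.univ_succ, Finset.cons_eq_insert]
  refine Finset.SupIndep.insert (Finset.supIndep_map.2 hf.sup_indep_univ) ?_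
  rw [Finset.sup_map, Fin.cons_zero]
  exact ha.mono_right (Finset.sup_le fun i _ => le_iSup f i)

end Independence

section Essential

variable {A N N' : Type*} [Ring A] [AddCommGroup N] [Module A N] [AddCommGroup N'] [Module A N']

/-- `M` is an essential submodule of the ambient module: only the zero submodule is disjoint
from `M`. -/
def IsEssentialSubmodule (M : Submodule A N) : Prop :=
  ∀ K : Submodule A N, Disjoint K M → K = ⊥

theorem IsEssentialSubmodule.mono {L M : Submodule A N} (hL : IsEssentialSubmodule L)
    (hLM : L ≤ M) : IsEssentialSubmodule M :=
  fun K hK => hL K (hK.mono_right hLM)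

theorem IsEssentialSubmodule.comap {M : Submodule A N} (hM : IsEssentialSubmodule M)
    (f : N' →ₗ[A] N) : IsEssentialSubmodule (M.comap f) := by
  intro K hK
  have hmap : K.map f = ⊥ := by
    refine hM _ (Submodule.disjoint_def.2 ?_)
    rintro _ ⟨x, hxK, rfl⟩ hxM
    rw [Submodule.disjoint_def.1 hK x hxK hxM, map_zero]
  have hle : K ≤ M.comap f := by
    rw [← Submodule.map_le_iff_le_comap, hmap]
    exact bot_le
  exact hK.eq_bot_of_le hle

theorem HasIndepFamily.isEssentialSubmodule {M : Submodule A N} {d : ℕ}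
    (hM : HasIndepFamily A M d) (hN : ¬ HasIndepFamily A N (d + 1)) :
    IsEssentialSubmodule M := by
  intro K hKM
  by_contra hK
  obtain ⟨f, hf0, hf⟩ := hM
  have hmap0 : ∀ i, (f i).map M.subtype ≠ ⊥ := fun i =>
    ((Submodule.map_injective_of_injective M.injective_subtype).ne_iff' (Submodule.map_bot _)).2
      (hf0 i)
  have hmap : iSupIndep fun i => (f i).map M.subtype :=
    LinearMap.iSupIndep_map M.subtype M.injective_subtype hf
  have hmapM : ⨆ i, (f i).map M.subtype ≤ M := iSup_le fun i => Submodule.map_subtype_le M (f i)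
  exact hN ⟨Fin.cons K fun i => (f i).map M.subtype, Fin.cases hK hmap0,
    iSupIndep_finCons hmap (hKM.mono_right hmapM)⟩

/-- A descending chain condition, up to essential submodules. -/
theorem NoInfiniteIndepFamily.exists_mem_forall_le_disjoint_eq_bot
    (h : NoInfiniteIndepFamily A N) {S : Set (Submodule A N)} (hS : S.Nonempty) :
    ∃ L ∈ S, ∀ K ∈ S, K ≤ L → ∀ B ≤ L, Disjoint B K → B = ⊥ := by
  have hwf : WellFounded fun K L : Submodule A N => K ≤ L ∧ ∃ B ≤ L, Disjoint B K ∧ B ≠ ⊥ := by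
    refine wellFounded_iff_isEmpty_descending_chain.2 ⟨fun ⟨L, hL⟩ => ?_⟩
    choose hanti B hBL hdisj hB using hL
    exact h ⟨B, hB, iSupIndep_of_antitone_of_disjoint (antitone_nat_of_succ_le hanti) hBL hdisj⟩
  obtain ⟨L, hLS, hmin⟩ := hwf.has_min S hS
  refine ⟨L, hLS, fun K hKS hKL B hBL hdisj => ?_⟩
  by_contra hB
  exact hmin K hKS ⟨hKL, B, hBL, hdisj, hB⟩

theorem NoInfiniteIndepFamily.isEssentialSubmodule_range (h : NoInfiniteIndepFamily A N)
    {f : Module.End A N} (hf : Function.Injective f) :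
    IsEssentialSubmodule (LinearMap.range f) := by
  obtain ⟨_, ⟨n, rfl⟩, hn⟩ :=
    h.exists_mem_forall_le_disjoint_eq_bot (Set.range_nonempty fun n => LinearMap.range (f ^ n))
  have hinj : Function.Injective (f ^ n) := by
    rw [Module.End.coe_pow]
    exact hf.iterate n
  have hrange : LinearMap.range (f ^ (n + 1)) = (LinearMap.range f).map (f ^ n) := by
    rw [pow_succ, Module.End.mul_eq_comp, LinearMap.range_comp]
  intro K hK
  have hmap : K.map (f ^ n) = ⊥ :=
    hn _ ⟨n + 1, hrange⟩ LinearMap.map_le_range _ LinearMap.map_le_range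
      (Submodule.disjoint_map hinj hK)
  exact ((Submodule.map_injective_of_injective hinj).eq_iff' (Submodule.map_bot _)).1 hmap

end Essential

section LeftAnnihilator

variable {A : Type*} [Ring A]

/-- The left annihilator `l(a) = {x | x * a = 0}` of a ring element, as a left ideal. -/
def leftAnn (a : A) : Ideal A := Ideal.torsionOf A A a

theorem mem_leftAnn {a x : A} : x ∈ leftAnn a ↔ x * a = 0 :=
  Ideal.mem_torsionOf_iff a x

theorem leftAnn_le_leftAnn_mul (a b : A) : leftAnn a ≤ leftAnn (a * b) := by
  intro x hx
  rw [mem_leftAnn] at hx ⊢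
  rw [← mul_assoc, hx, zero_mul]

theorem disjoint_span_singleton_leftAnn_iff {a b : A} :
    Disjoint (Ideal.span {a}) (leftAnn b) ↔ ∀ x, x * a * b = 0 → x * a = 0 := by
  simp only [Submodule.disjoint_def, Ideal.mem_span_singleton', forall_exists_index,
    forall_apply_eq_imp_iff, mem_leftAnn]

theorem leftAnn_add_eq_inf {b c : A} (hc : Disjoint (Ideal.span {c}) (leftAnn c))
    (hbc : b * c = 0) : leftAnn (c + b) = leftAnn c ⊓ leftAnn b := by
  ext x
  simp only [Submodule.mem_inf, mem_leftAnn, mul_add]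
  refine ⟨fun hx => ?_, fun ⟨hxc, hxb⟩ => by rw [hxc, hxb, add_zero]⟩
  have hxcc : x * c * c = 0 := by
    simpa only [add_mul, mul_assoc, hbc, mul_zero, add_zero, zero_mul] using congrArg (· * c) hx
  have hxc : x * c = 0 := disjoint_span_singleton_leftAnn_iff.1 hc x hxcc
  exact ⟨hxc, by rwa [hxc, zero_add] at hx⟩

theorem disjoint_span_singleton_leftAnn_add {b c : A}
    (hc : Disjoint (Ideal.span {c}) (leftAnn c)) (hb : Disjoint (Ideal.span {b}) (leftAnn b))
    (hbc : b * c = 0) : Disjoint (Ideal.span {c + b}) (leftAnn (c + b)) := by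
  rw [disjoint_span_singleton_leftAnn_iff] at hb ⊢
  intro x hx
  rw [← mem_leftAnn, leftAnn_add_eq_inf hc hbc, Submodule.mem_inf, mem_leftAnn, mem_leftAnn] at hx
  obtain ⟨hxc, hxb⟩ := hx
  have hxcc : x * c * c = 0 := by
    rwa [mul_add, add_mul, mul_assoc x b, hbc, mul_zero, add_zero] at hxc
  have hxc0 : x * c = 0 := disjoint_span_singleton_leftAnn_iff.1 hc x hxcc
  rw [mul_add, hxc0, zero_add] at hxb ⊢
  exact hb x hxb

theorem isLeftAnnihilatorSet_leftAnn (a : A) : IsLeftAnnihilatorSet (leftAnn a : Set A) :=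
  ⟨{a}, by ext; simp only [SetLike.mem_coe, mem_leftAnn, Set.mem_singleton_iff, forall_eq,
    Set.mem_ofPred_eq]⟩

theorem ACCLeftAnnihilators.exists_maximalFor_leftAnn (h : ACCLeftAnnihilators A) {S : Set A}
    (hS : S.Nonempty) : ∃ z, MaximalFor (· ∈ S) leftAnn z := by
  have : WellFoundedGT {T : Set A // IsLeftAnnihilatorSet T} := by
    rw [wellFoundedGT_iff_monotone_chain_condition]
    intro T
    obtain ⟨n, hn⟩ := h (fun i => (T i).1) (fun i => (T i).2) fun _ _ hij => T.monotone hij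
    exact ⟨n, fun m hm => Subtype.ext (hn m hm).symm⟩
  exact exists_maximalFor_of_wellFoundedGT (· ∈ S)
    (fun a => (⟨leftAnn a, isLeftAnnihilatorSet_leftAnn a⟩ : {T : Set A // IsLeftAnnihilatorSet T}))
    hS

theorem ACCLeftAnnihilators.exists_disjoint_span_pow_leftAnn_pow (h : ACCLeftAnnihilators A)
    (a : A) : ∃ n ≠ 0, Disjoint (Ideal.span {a ^ n}) (leftAnn (a ^ n)) := by
  obtain ⟨_, ⟨n, hn, rfl⟩, hmax⟩ :=
    h.exists_maximalFor_leftAnn (S := (a ^ ·) '' {n | n ≠ 0}) ⟨a ^ 1, 1, one_ne_zero, rfl⟩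
  refine ⟨n, hn, disjoint_span_singleton_leftAnn_iff.2 fun x hx => ?_⟩
  have hle : leftAnn (a ^ n * a ^ n) ≤ leftAnn (a ^ n) :=
    hmax ⟨n + n, by simpa using hn, pow_add a n n⟩ (leftAnn_le_leftAnn_mul _ _)
  exact mem_leftAnn.1 (hle (mem_leftAnn.2 (by rwa [← mul_assoc])))

theorem ACCLeftAnnihilators.isNilpotent_of_isEssentialSubmodule_leftAnn
    (h : ACCLeftAnnihilators A) {a : A} (ha : IsEssentialSubmodule (leftAnn a)) :
    IsNilpotent a := by
  obtain ⟨n, hn, hdisj⟩ := h.exists_disjoint_span_pow_leftAnn_pow a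
  have hle : leftAnn a ≤ leftAnn (a ^ n) := by
    rw [← mul_pow_sub_one hn]
    exact leftAnn_le_leftAnn_mul _ _
  exact ⟨n, Ideal.span_singleton_eq_bot.1 (ha.mono hle _ hdisj)⟩

theorem NoInfiniteIndepFamily.isEssentialSubmodule_span_singleton
    (h : NoInfiniteIndepFamily A A) {c : A} (hc : leftAnn c = ⊥) :
    IsEssentialSubmodule (Ideal.span {c}) := by
  have := h.isEssentialSubmodule_range (LinearMap.ker_eq_bot.1 hc)
  rwa [LinearMap.range_toSpanSingleton] at this

end LeftAnnihilator

theorem isNilpotent_mul_comm {R : Type*} [MonoidWithZero R] {a b : R} :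
    IsNilpotent (a * b) ↔ IsNilpotent (b * a) := by
  suffices ∀ {a b : R}, IsNilpotent (a * b) → IsNilpotent (b * a) from ⟨this, this⟩
  rintro a b ⟨n, hn⟩
  refine ⟨n + 1, ?_⟩
  rw [pow_succ, ← mul_assoc, mul_pow_mul, hn, mul_zero, zero_mul]

section SemiprimeGoldie

variable {A : Type*} [Ring A]

theorem IsSemiprimeRing.eq_zero_of_forall_mul_mul (hs : IsSemiprimeRing A) {z : A}
    (hz : ∀ r : A, z * r * z = 0) : z = 0 := by
  have hspan : Ideal.span {z} * Ideal.span {z} = ⊥ := by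
    refine le_bot_iff.1 (Ideal.mul_le.2 fun x hx y hy => ?_)
    obtain ⟨r, rfl⟩ := Ideal.mem_span_singleton'.1 hx
    obtain ⟨s, rfl⟩ := Ideal.mem_span_singleton'.1 hy
    rw [Submodule.mem_bot, mul_assoc, ← mul_assoc z, hz, mul_zero]
  let I : Ideal A := Ideal.span {z} * ⊤
  have hI : I = ⊥ := by
    refine hs I (fun a ha r => I.mul_mem_right r ha) ⟨1, ?_⟩
    calc I ^ (1 + 1)
      _ = Ideal.span {z} * (⊤ * (Ideal.span {z} * ⊤)) := by
        rw [Submodule.pow_succ, Submodule.pow_one, Ideal.mul_assoc]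
      _ = ⊥ := by rw [Ideal.top_mul, ← Ideal.mul_assoc, hspan, Ideal.bot_mul]
  have hzI : z * 1 ∈ I :=
    Ideal.mul_mem_mul (Ideal.mem_span_singleton_self z) Submodule.mem_top
  rwa [hI, Submodule.mem_bot, mul_one] at hzI

theorem IsSemiprimeRing.eq_zero_of_forall_isNilpotent_mul (hs : IsSemiprimeRing A)
    (h : ACCLeftAnnihilators A) {a : A} (ha : ∀ r : A, IsNilpotent (a * r)) : a = 0 := by
  by_contra ha0
  have : Nontrivial A := ⟨⟨a, 0, ha0⟩⟩
  obtain ⟨_, ⟨⟨s, rfl⟩, hz0⟩, hmax⟩ :=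
    h.exists_maximalFor_leftAnn (S := {z | (∃ s, a * s = z) ∧ z ≠ 0}) ⟨a, ⟨1, mul_one a⟩, ha0⟩
  refine hz0 (hs.eq_zero_of_forall_mul_mul fun r => ?_)
  set z := a * s
  have hnil : IsNilpotent (z * r) := by simpa only [z, mul_assoc] using ha (s * r)
  obtain ⟨k, hk⟩ := Nat.exists_eq_succ_of_ne_zero (pos_nilpotencyClass_iff.2 hnil).ne'
  obtain ⟨hpow_succ, hpow⟩ := nilpotencyClass_eq_succ_iff.1 hk
  cases k with
  | zero => rw [← pow_one (z * r), hpow_succ, zero_mul]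
  | succ k =>
    -- The last nonzero power of `z * r` lies in `a * A`, so its left annihilator, which contains
    -- `z * r`, is `l(z)` by maximality.
    have heq : z * (r * (z * r) ^ k) = (z * r) ^ (k + 1) := by rw [← mul_assoc, pow_succ']
    have hle : leftAnn ((z * r) ^ (k + 1)) ≤ leftAnn z :=
      hmax ⟨⟨s * (r * (z * r) ^ k), by rw [← mul_assoc, heq]⟩, hpow⟩
        (heq ▸ leftAnn_le_leftAnn_mul _ _)
    exact mem_leftAnn.1 (hle (mem_leftAnn.2 (by rw [← pow_succ', hpow_succ])))

theorem IsSemiprimeRing.eq_zero_of_isEssentialSubmodule_leftAnn (hs : IsSemiprimeRing A)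
    (h : ACCLeftAnnihilators A) {a : A} (ha : IsEssentialSubmodule (leftAnn a)) : a = 0 :=
  hs.eq_zero_of_forall_isNilpotent_mul h fun r =>
    h.isNilpotent_of_isEssentialSubmodule_leftAnn (ha.mono (leftAnn_le_leftAnn_mul a r))

theorem IsSemiprimeRing.exists_mem_ne_zero_disjoint_leftAnn (hs : IsSemiprimeRing A)
    (h : ACCLeftAnnihilators A) {K : Ideal A} (hK : K ≠ ⊥) :
    ∃ b ∈ K, b ≠ 0 ∧ Disjoint (Ideal.span {b}) (leftAnn b) := by
  obtain ⟨a, haK, ha0⟩ := Submodule.exists_mem_ne_zero_of_ne_bot hK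
  obtain ⟨r, hr⟩ : ∃ r : A, ¬ IsNilpotent (r * a) := by
    by_contra! hnil
    exact ha0 (hs.eq_zero_of_forall_isNilpotent_mul h fun r => isNilpotent_mul_comm.1 (hnil r))
  obtain ⟨n, hn, hdisj⟩ := h.exists_disjoint_span_pow_leftAnn_pow (r * a)
  refine ⟨(r * a) ^ n, ?_, fun h0 => hr ⟨n, h0⟩, hdisj⟩
  exact K.pow_mem_of_mem (K.mul_mem_left r haK) n (Nat.pos_of_ne_zero hn)

theorem IsEssentialSubmodule.exists_mem_leftAnn_eq_bot {I : Ideal A}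
    (hI : IsEssentialSubmodule I) (hs : IsSemiprimeRing A) (hg : IsLeftGoldie A) :
    ∃ c ∈ I, leftAnn c = ⊥ := by
  let S : Set A := {c | c ∈ I ∧ Disjoint (Ideal.span {c}) (leftAnn c)}
  have hS : S.Nonempty :=
    ⟨0, I.zero_mem, by rw [Ideal.span_singleton_eq_bot.2 rfl]; exact disjoint_bot_left⟩
  obtain ⟨_, ⟨c, ⟨hcI, hc⟩, rfl⟩, hmin⟩ :=
    hg.2.exists_mem_forall_le_disjoint_eq_bot (hS.image leftAnn)
  refine ⟨c, hcI, ?_⟩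
  by_contra hne
  have hK : leftAnn c ⊓ I ≠ ⊥ := fun hbot => hne (hI _ (disjoint_iff.2 hbot))
  obtain ⟨b, ⟨hbc, hbI⟩, hb0, hb⟩ := hs.exists_mem_ne_zero_disjoint_leftAnn hg.1 hK
  have hadd : leftAnn (c + b) = leftAnn c ⊓ leftAnn b := leftAnn_add_eq_inf hc (mem_leftAnn.1 hbc)
  have hmem : c + b ∈ S :=
    ⟨I.add_mem hcI hbI, disjoint_span_singleton_leftAnn_add hc hb (mem_leftAnn.1 hbc)⟩
  refine hb0 (Ideal.span_singleton_eq_bot.1 (hmin _ ⟨c + b, hmem, rfl⟩ ?_ (Ideal.span {b}) ?_ ?_))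
  · exact hadd.trans_le inf_le_left
  · exact (Ideal.span_singleton_le_iff_mem _).2 hbc
  · exact hb.mono_right (hadd.trans_le inf_le_right)

theorem IsEssentialSubmodule.exists_mem_isRegElem {I : Ideal A} (hI : IsEssentialSubmodule I)
    (hs : IsSemiprimeRing A) (hg : IsLeftGoldie A) : ∃ c ∈ I, IsRegElem c := by
  obtain ⟨c, hcI, hc⟩ := hI.exists_mem_leftAnn_eq_bot hs hg
  refine ⟨c, hcI, fun x hcx => ?_, fun x hxc => ?_⟩
  · have hle : Ideal.span {c} ≤ leftAnn x :=
      (Ideal.span_singleton_le_iff_mem _).2 (mem_leftAnn.2 hcx)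
    exact hs.eq_zero_of_isEssentialSubmodule_leftAnn hg.1
      ((hg.2.isEssentialSubmodule_span_singleton hc).mono hle)
  · rwa [← mem_leftAnn, hc, Submodule.mem_bot] at hxc

theorem IsEssentialSubmodule.exists_isRegElem_smul_mem {N : Type*} [AddCommGroup N] [Module A N]
    {M : Submodule A N} (hM : IsEssentialSubmodule M) (hs : IsSemiprimeRing A)
    (hg : IsLeftGoldie A) (x : N) : ∃ c : A, IsRegElem c ∧ c • x ∈ M := by
  obtain ⟨c, hcM, hc⟩ := (hM.comap (LinearMap.toSpanSingleton A N x)).exists_mem_isRegElem hs hg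
  exact ⟨c, hc, hcM⟩

theorem torsion_of_equal_uniform_dimension_general {N : Type*} [AddCommGroup N] [Module A N]
    (hs : IsSemiprimeRing A) (hg : IsLeftGoldie A) {M : Submodule A N} {d : ℕ}
    (hM : HasIndepFamily A M d) (hN : ¬ HasIndepFamily A N (d + 1)) (x : N) :
    ∃ c : A, IsRegElem c ∧ c • x ∈ M :=
  (hM.isEssentialSubmodule hN).exists_isRegElem_smul_mem hs hg x

end SemiprimeGoldie

/-- **Lemma (`a2Sep12`).** Let `R̄` be a semiprime left Goldie ring with set of regular
elements `C̄`, and let `M ⊆ N` be `C̄`-torsionfree left `R̄`-modules with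
`udim M = udim N < ∞`.  Then `N/M` is `C̄`-torsion, i.e. every element of `N/M` is
annihilated by some regular element (equivalently: for every `x ∈ N` there is `c̄ ∈ C̄`
with `c̄ • x ∈ M`). -/
theorem torsion_of_equal_uniform_dimension
    {A : Type u} [Ring A] (hsemiprime : IsSemiprimeRing A) (hgoldie : IsLeftGoldie A)
    {N : Type v} [AddCommGroup N] [Module A N] (M : Submodule A N)
    (htfN : ∀ c : A, IsRegElem c → ∀ x : N, c • x = 0 → x = 0)
    (htfM : ∀ c : A, IsRegElem c → ∀ x : ↥M, c • x = 0 → x = 0)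
    (d : ℕ) (hdM : UdimEq A ↥M d) (hdN : UdimEq A N d) :
    ∀ x : N, ∃ c : A, IsRegElem c ∧ c • x ∈ M :=
  torsion_of_equal_uniform_dimension_general hsemiprime hgoldie hdM.1 hdN.2
end
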